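/- arXiv:2202.06195 — 3 statements merged into one kernel-verified Lean document; each statement's English description precedes it below -/
import Mathlib

section
/- We have ∑_{n₁ > n₂ ≥ 1} 4^{n₁} / (binom(2n₁, n₁) · (2n₁)² · (2n₂−1)) = π²/8 − 2G + (7/4) ζ(3), where G = ∑_{k=0}^∞ (−1)^k/(2k+1)² is Catalan's constant, ζ(3) = ∑_{n=1}^∞ 1/n³, and the double sum is over integers n₁ > n₂ ≥ 1. -/
open Real

/-!
The number `4 ^ (n + 1) / ((2 * n + 2) * centralBinom (n + 1))` is the Wallis integral
`W n = ∫ θ in 0..π/2, sin θ ^ (2 * n + 1)`. With `O n = ∑ i < n, 1 / (2 * i + 1)`, summing over `n₂`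
turns the double series into `∑ W n * O n / (2 * n + 2)`, and
`O n / (2 * n + 2) = O (n + 1) / (2 * n + 2) - 1 / (2 * n + 1) + 1 / (2 * n + 2)`.
The substitutions `cos θ = 1 / cosh x` (in the first two pieces) and `cos θ = exp (-x)` (in the
third) move `W n` to the half-line. There the series in `n` sum, through the Taylor series of
`artanh ^ 2`, `artanh` and `log`, to `x ^ 2 / (2 * sinh x)`, `x / cosh x` and `x / (2 * sinh x)`,
and expanding these in powers of `exp (-x)` gives the three constants.
-/

open MeasureTheory Set Filter Topology
open Finset.HasAntidiagonal (antidiagonal)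
open scoped Nat

section TermwiseIntegration

variable {α ι : Type*} [MeasurableSpace α] {μ : Measure α} [Countable ι]

theorem hasSum_integral_of_nonneg {f : ι → α → ℝ} {F : α → ℝ}
    (hf : ∀ i, AEStronglyMeasurable (f i) μ) (hf_nonneg : ∀ i, 0 ≤ᵐ[μ] f i)
    (hF : Integrable F μ) (hsum : ∀ᵐ x ∂μ, HasSum (fun i => f i x) (F x)) :
    HasSum (fun i => ∫ x, f i x ∂μ) (∫ x, F x ∂μ) := by
  refine hasSum_integral_of_dominated_convergence f hf (fun i => ?_)
    (hsum.mono fun x hx => hx.summable)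
    (hF.congr (hsum.mono fun x hx => hx.tsum_eq.symm)) hsum
  filter_upwards [hf_nonneg i] with x hx using (norm_of_nonneg hx).le

variable {E : Type*} [NormedAddCommGroup E]

theorem integrable_of_hasSum_of_summable_integral_norm {f : ι → α → E} {F : α → E}
    (hf : ∀ i, Integrable (f i) μ) (hf_sum : Summable fun i => ∫ x, ‖f i x‖ ∂μ)
    (hsum : ∀ᵐ x ∂μ, HasSum (fun i => f i x) (F x)) : Integrable F μ := by
  have hmeas : AEStronglyMeasurable F μ :=
    aestronglyMeasurable_of_tendsto_ae atTop
      (fun s => Finset.aestronglyMeasurable_fun_sum s fun i _ => (hf i).1) hsum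
  refine ⟨hmeas, ?_⟩
  calc ∫⁻ x, ‖F x‖ₑ ∂μ
      ≤ ∫⁻ x, ∑' i, ‖f i x‖ₑ ∂μ := by
        refine lintegral_mono_ae (hsum.mono fun x hx => ?_)
        exact hx.tsum_eq ▸ enorm_tsum_le_tsum_enorm
    _ = ∑' i, ENNReal.ofReal (∫ x, ‖f i x‖ ∂μ) := by
        rw [lintegral_tsum fun i => (hf i).1.enorm]
        simp only [ofReal_integral_norm_eq_lintegral_enorm (hf _)]
    _ = ENNReal.ofReal (∑' i, ∫ x, ‖f i x‖ ∂μ) :=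
        (ENNReal.ofReal_tsum_of_nonneg
          (fun i => integral_nonneg fun x => norm_nonneg _) hf_sum).symm
    _ < ⊤ := ENNReal.ofReal_lt_top

theorem hasSum_integral_of_hasSum_of_summable_integral_norm [NormedSpace ℝ E]
    {f : ι → α → E} {F : α → E}
    (hf : ∀ i, Integrable (f i) μ) (hf_sum : Summable fun i => ∫ x, ‖f i x‖ ∂μ)
    (hsum : ∀ᵐ x ∂μ, HasSum (fun i => f i x) (F x)) :
    HasSum (fun i => ∫ x, f i x ∂μ) (∫ x, F x ∂μ) := by
  rw [← integral_congr_ae (hsum.mono fun x hx => hx.tsum_eq)]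
  exact hasSum_integral_of_summable_integral_norm hf hf_sum

end TermwiseIntegration

section MellinTransform

theorem integral_pow_mul_exp_neg_mul_Ioi (k : ℕ) {c : ℝ} (hc : 0 < c) :
    ∫ x in Ioi (0 : ℝ), x ^ k * exp (-(c * x)) = k ! / c ^ (k + 1) := by
  have h := integral_rpow_mul_exp_neg_mul_Ioi (a := k + 1) (by positivity) hc
  simp only [add_sub_cancel_right, rpow_natCast, Gamma_nat_eq_factorial] at h
  rw [h, ← Nat.cast_succ, rpow_natCast, one_div_pow, one_div_mul_eq_div]

theorem integrableOn_pow_mul_exp_neg_mul_Ioi (k : ℕ) {c : ℝ} (hc : 0 < c) :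
    IntegrableOn (fun x : ℝ => x ^ k * exp (-(c * x))) (Ioi 0) := by
  refine .of_integral_ne_zero ?_
  rw [integral_pow_mul_exp_neg_mul_Ioi k hc]
  positivity

variable {ι : Type*} [Countable ι] {a p : ι → ℝ} {F : ℝ → ℝ}

theorem integrableOn_and_hasSum_integral_pow_mul_of_hasSum_exp (k : ℕ) (hp : ∀ i, 0 < p i)
    (ha : Summable fun i => |a i| / p i ^ (k + 1))
    (hF : ∀ x > 0, HasSum (fun i => a i * exp (-(p i * x))) (F x)) :
    IntegrableOn (fun x => x ^ k * F x) (Ioi 0) ∧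
      HasSum (fun i => k ! * (a i / p i ^ (k + 1))) (∫ x in Ioi (0 : ℝ), x ^ k * F x) := by
  let f : ι → ℝ → ℝ := fun i x => a i * (x ^ k * exp (-(p i * x)))
  have hf : ∀ i, IntegrableOn (f i) (Ioi 0) := fun i =>
    (integrableOn_pow_mul_exp_neg_mul_Ioi k (hp i)).const_mul (a i)
  have integral_f : ∀ i, ∫ x in Ioi (0 : ℝ), f i x = k ! * (a i / p i ^ (k + 1)) := fun i => by
    rw [integral_const_mul, integral_pow_mul_exp_neg_mul_Ioi k (hp i)]
    ring
  have integral_norm_f : ∀ i, ∫ x in Ioi (0 : ℝ), ‖f i x‖ = k ! * (|a i| / p i ^ (k + 1)) := by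
    intro i
    have norm_f : ∀ x ∈ Ioi (0 : ℝ), ‖f i x‖ = |a i| * (x ^ k * exp (-(p i * x))) := by
      intro x (hx : 0 < x)
      rw [norm_mul, norm_eq_abs, norm_of_nonneg (by positivity)]
    rw [setIntegral_congr_fun measurableSet_Ioi norm_f, integral_const_mul,
      integral_pow_mul_exp_neg_mul_Ioi k (hp i)]
    ring
  have hf_sum : Summable fun i => ∫ x in Ioi (0 : ℝ), ‖f i x‖ := by
    simpa only [integral_norm_f] using ha.mul_left (k ! : ℝ)
  have hsum : ∀ᵐ x ∂volume.restrict (Ioi 0), HasSum (fun i => f i x) (x ^ k * F x) := by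
    filter_upwards [ae_restrict_mem measurableSet_Ioi] with x hx
    simpa only [f, mul_left_comm] using (hF x hx).mul_left (x ^ k)
  refine ⟨integrable_of_hasSum_of_summable_integral_norm hf hf_sum hsum, ?_⟩
  simpa only [integral_f] using hasSum_integral_of_hasSum_of_summable_integral_norm hf hf_sum hsum

end MellinTransform

section HyperbolicIntegrals

theorem hasSum_pow_mul_exp_neg_odd_mul {ε x : ℝ} (hε : |ε| ≤ 1) (hx : 0 < x) :
    HasSum (fun n : ℕ => ε ^ n * exp (-((2 * n + 1) * x))) (exp x - ε * exp (-x))⁻¹ := by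
  have hr : |ε * exp (-(2 * x))| < 1 := by
    rw [abs_mul, abs_exp]
    exact mul_lt_one_of_nonneg_of_lt_one_right hε (exp_pos _).le (exp_lt_one_iff.2 (by linarith))
  have hsum : exp (-x) * (1 - ε * exp (-(2 * x)))⁻¹ = (exp x - ε * exp (-x))⁻¹ := by
    rw [exp_neg x, ← mul_inv, mul_sub, mul_left_comm, ← exp_neg, ← exp_add]
    congr 3 <;> ring_nf
  rw [← hsum]
  convert! (hasSum_geometric_of_abs_lt_one hr).mul_left (exp (-x)) using 2 with n
  rw [mul_pow, ← exp_nat_mul, mul_left_comm, ← exp_add]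
  ring_nf

theorem hasSum_exp_neg_odd_mul {x : ℝ} (hx : 0 < x) :
    HasSum (fun n : ℕ => exp (-((2 * n + 1) * x))) (2 * sinh x)⁻¹ := by
  convert! hasSum_pow_mul_exp_neg_odd_mul (ε := 1) (by simp) hx using 2 with n
  · rw [one_pow, one_mul]
  · rw [sinh_eq]
    ring

theorem hasSum_neg_one_pow_mul_exp_neg_odd_mul {x : ℝ} (hx : 0 < x) :
    HasSum (fun n : ℕ => (-1) ^ n * exp (-((2 * n + 1) * x))) (2 * cosh x)⁻¹ := by
  convert! hasSum_pow_mul_exp_neg_odd_mul (ε := -1) (by simp) hx using 2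
  rw [cosh_eq]
  ring

theorem hasSum_one_div_odd_pow {s : ℕ} {Z : ℝ} (h : HasSum (fun n : ℕ => 1 / (n : ℝ) ^ s) Z) :
    HasSum (fun n : ℕ => 1 / (2 * n + 1 : ℝ) ^ s) ((1 - 1 / 2 ^ s) * Z) := by
  have hodd : HasSum (fun n : ℕ => 1 / (2 * n + 1 : ℝ) ^ s)
      (∑' n : ℕ, 1 / (2 * n + 1 : ℝ) ^ s) := by
    refine Summable.hasSum ?_
    simpa [Function.comp_def] using
      h.summable.comp_injective (i := fun n : ℕ => 2 * n + 1) fun m n => by simp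
  have heven : HasSum (fun n : ℕ => 1 / (2 * n : ℝ) ^ s) (1 / 2 ^ s * Z) := by
    simpa only [mul_pow, ← one_div_mul_one_div] using h.mul_left (1 / 2 ^ s)
  have hsplit : 1 / 2 ^ s * Z + ∑' n : ℕ, 1 / (2 * n + 1 : ℝ) ^ s = Z :=
    (HasSum.even_add_odd (f := fun n : ℕ => 1 / (n : ℝ) ^ s) (mod_cast heven)
      (mod_cast hodd)).unique h
  rwa [sub_mul, one_mul, ← eq_sub_of_add_eq' hsplit]

theorem integrableOn_and_hasSum_integral_pow_mul_inv_two_mul_sinh {k : ℕ} (hk : k ≠ 0) :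
    IntegrableOn (fun x => x ^ k * (2 * sinh x)⁻¹) (Ioi 0) ∧
      HasSum (fun n : ℕ => k ! * (1 / (2 * n + 1 : ℝ) ^ (k + 1)))
        (∫ x in Ioi (0 : ℝ), x ^ k * (2 * sinh x)⁻¹) := by
  have hzeta : Summable fun n : ℕ => 1 / (n : ℝ) ^ (k + 1) :=
    summable_one_div_nat_pow.2 (by omega)
  refine integrableOn_and_hasSum_integral_pow_mul_of_hasSum_exp k (a := fun _ => 1)
    (fun n => by positivity) ?_ fun x hx => by simpa only [one_mul] using hasSum_exp_neg_odd_mul hx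
  simpa only [abs_one] using (hasSum_one_div_odd_pow hzeta.hasSum).summable

theorem integrableOn_pow_mul_inv_two_mul_sinh {k : ℕ} (hk : k ≠ 0) :
    IntegrableOn (fun x => x ^ k * (2 * sinh x)⁻¹) (Ioi 0) :=
  (integrableOn_and_hasSum_integral_pow_mul_inv_two_mul_sinh hk).1

theorem integral_pow_mul_inv_two_mul_sinh {k : ℕ} {Z : ℝ} (hk : k ≠ 0)
    (hZ : HasSum (fun n : ℕ => 1 / (n : ℝ) ^ (k + 1)) Z) :
    ∫ x in Ioi (0 : ℝ), x ^ k * (2 * sinh x)⁻¹ = k ! * ((1 - 1 / 2 ^ (k + 1)) * Z) :=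
  (integrableOn_and_hasSum_integral_pow_mul_inv_two_mul_sinh hk).2.unique
    ((hasSum_one_div_odd_pow hZ).mul_left _)

theorem integrableOn_and_hasSum_integral_pow_mul_inv_two_mul_cosh {k : ℕ} (hk : k ≠ 0) :
    IntegrableOn (fun x => x ^ k * (2 * cosh x)⁻¹) (Ioi 0) ∧
      HasSum (fun n : ℕ => k ! * ((-1) ^ n / (2 * n + 1 : ℝ) ^ (k + 1)))
        (∫ x in Ioi (0 : ℝ), x ^ k * (2 * cosh x)⁻¹) := by
  have hzeta : Summable fun n : ℕ => 1 / (n : ℝ) ^ (k + 1) :=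
    summable_one_div_nat_pow.2 (by omega)
  refine integrableOn_and_hasSum_integral_pow_mul_of_hasSum_exp k (fun n => by positivity) ?_
    fun x hx => hasSum_neg_one_pow_mul_exp_neg_odd_mul hx
  simpa only [abs_neg_one_pow] using (hasSum_one_div_odd_pow hzeta.hasSum).summable

end HyperbolicIntegrals

/-- The partial sum `1 + 1/3 + ⋯ + 1/(2n - 1)` of the first `n` odd unit fractions: the inner sum
`∑ 1 / (2 n₂ - 1)` over `1 ≤ n₂ ≤ n`. -/
noncomputable def oddHarmonic (n : ℕ) : ℝ := ∑ i ∈ Finset.range n, 1 / (2 * (i : ℝ) + 1)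

theorem oddHarmonic_succ (n : ℕ) : oddHarmonic (n + 1) = oddHarmonic n + 1 / (2 * n + 1) :=
  Finset.sum_range_succ _ n

theorem oddHarmonic_nonneg (n : ℕ) : 0 ≤ oddHarmonic n :=
  Finset.sum_nonneg fun _ _ => by positivity

theorem hasSum_artanh {t : ℝ} (ht : |t| < 1) :
    HasSum (fun n : ℕ => t ^ (2 * n + 1) / (2 * n + 1)) (artanh t) := by
  have ⟨h1, h2⟩ := abs_lt.1 ht
  rw [artanh_eq_half_log ⟨h1.le, h2.le⟩, log_div (by linarith) (by linarith)]
  convert! (hasSum_log_sub_log_of_abs_lt_one ht).mul_left (1 / 2) using 2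
  ring

theorem sum_antidiagonal_one_div_odd_mul_odd (n : ℕ) :
    ∑ kl ∈ antidiagonal n, 1 / ((2 * kl.1 + 1 : ℝ) * (2 * kl.2 + 1)) =
      oddHarmonic (n + 1) / (n + 1) := by
  have hfst : ∑ kl ∈ antidiagonal n, 1 / (2 * kl.1 + 1 : ℝ) = oddHarmonic (n + 1) :=
    Finset.Nat.sum_antidiagonal_eq_sum_range_succ_mk _ n
  have hsnd : ∑ kl ∈ antidiagonal n, 1 / (2 * kl.2 + 1 : ℝ) = oddHarmonic (n + 1) := by
    rw [← hfst, ← Finset.Nat.sum_antidiagonal_swap]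
    rfl
  calc _ = ∑ kl ∈ antidiagonal n,
          (1 / (2 * kl.1 + 1 : ℝ) + 1 / (2 * kl.2 + 1)) / (2 * n + 2) := by
        refine Finset.sum_congr rfl fun kl hkl => ?_
        rw [← Finset.HasAntidiagonal.mem_antidiagonal.1 hkl]
        push_cast
        field_simp
        ring
    _ = oddHarmonic (n + 1) / (n + 1) := by
        rw [← Finset.sum_div, Finset.sum_add_distrib, hfst, hsnd]
        field_simp
        ring

theorem hasSum_artanh_sq {t : ℝ} (ht : |t| < 1) :
    HasSum (fun n : ℕ => oddHarmonic (n + 1) / (n + 1) * t ^ (2 * n + 2)) (artanh t ^ 2) := by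
  have h := hasSum_artanh ht
  have hnorm := h.summable.norm
  have hsum := (summable_norm_sum_mul_antidiagonal_of_summable_norm hnorm hnorm).of_norm.hasSum
  rw [← tsum_mul_tsum_eq_tsum_sum_antidiagonal_of_summable_norm hnorm hnorm, h.tsum_eq,
    ← sq] at hsum
  convert! hsum using 2 with n
  rw [← sum_antidiagonal_one_div_odd_mul_odd, Finset.sum_mul]
  refine Finset.sum_congr rfl fun kl hkl => ?_
  rw [← Finset.HasAntidiagonal.mem_antidiagonal.1 hkl, one_div_mul_eq_div, div_mul_div_comm,
    ← pow_add]
  congr 2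
  ring

/-- The Wallis integral with odd exponent `2n + 1`; up to rational factors, the central binomial
denominators of the series. -/
noncomputable def wallisIntegral (n : ℕ) : ℝ := ∫ θ in 0..π / 2, sin θ ^ (2 * n + 1)

theorem wallisIntegral_succ (n : ℕ) :
    wallisIntegral (n + 1) = (2 * n + 2) / (2 * n + 3) * wallisIntegral n := by
  have h := integral_sin_pow (a := 0) (b := π / 2) (2 * n + 1)
  rw [sin_zero, zero_pow (by omega), cos_pi_div_two, mul_zero, zero_mul, sub_zero, zero_div,
    zero_add] at h
  push_cast at h
  rw [wallisIntegral, wallisIntegral, show 2 * (n + 1) + 1 = 2 * n + 1 + 2 by ring, h]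
  ring

theorem wallisIntegral_eq_four_pow_div (n : ℕ) :
    wallisIntegral n = 4 ^ (n + 1) / ((2 * n + 2) * Nat.centralBinom (n + 1)) := by
  have hpos (m : ℕ) : (0 : ℝ) < Nat.centralBinom m := mod_cast m.centralBinom_pos
  induction n with
  | zero =>
    have : Nat.centralBinom 1 = 2 := rfl
    norm_num [wallisIntegral, this]
  | succ n ih =>
    have hrec : ((n : ℝ) + 2) * Nat.centralBinom (n + 2) =
        2 * (2 * (n + 1) + 1) * Nat.centralBinom (n + 1) :=
      mod_cast Nat.succ_mul_centralBinom_succ (n + 1)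
    have := hpos (n + 1)
    have := hpos (n + 2)
    rw [wallisIntegral_succ, ih]
    push_cast
    field_simp
    linear_combination 2 * 4 ^ (n + 1) * hrec

theorem wallisIntegral_eq_integral_one_sub_sq_pow (n : ℕ) :
    wallisIntegral n = ∫ t in (0 : ℝ)..1, (1 - t ^ 2) ^ n := by
  simpa [wallisIntegral] using integral_sin_pow_odd_mul_cos_pow (a := 0) (b := π / 2) n 0

section HalfLineSubstitution

variable {c g : ℝ → ℝ}

theorem integrableOn_and_integral_one_sub_sq_pow_mul_eq_wallisIntegral
    (hc : ∀ x ∈ Ici (0 : ℝ), HasDerivAt c (-g x) x) (hc_zero : c 0 = 1)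
    (hc_lim : Tendsto c atTop (𝓝 0)) (hc_sq : ∀ x ∈ Ioi (0 : ℝ), c x ^ 2 ≤ 1)
    (hg : ∀ x ∈ Ioi (0 : ℝ), 0 ≤ g x) (n : ℕ) :
    IntegrableOn (fun x => (1 - c x ^ 2) ^ n * g x) (Ioi 0) ∧
    ∫ x in Ioi (0 : ℝ), (1 - c x ^ 2) ^ n * g x = wallisIntegral n := by
  have hcont : Continuous fun t : ℝ => (1 - t ^ 2) ^ n := by fun_prop
  let P : ℝ → ℝ := fun y => ∫ t in y..1, (1 - t ^ 2) ^ n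
  have hP (y : ℝ) : HasDerivAt P (-(1 - y ^ 2) ^ n) y :=
    intervalIntegral.integral_hasDerivAt_left (hcont.intervalIntegrable _ _)
      hcont.aestronglyMeasurable.stronglyMeasurableAtFilter hcont.continuousAt
  have hderiv : ∀ x ∈ Ici (0 : ℝ), HasDerivAt (P ∘ c) ((1 - c x ^ 2) ^ n * g x) x := fun x hx =>
    ((hP (c x)).comp x (hc x hx)).congr_deriv (by ring)
  have hnonneg : ∀ x ∈ Ioi (0 : ℝ), 0 ≤ (1 - c x ^ 2) ^ n * g x := fun x hx =>
    mul_nonneg (pow_nonneg (sub_nonneg.2 (hc_sq x hx)) n) (hg x hx)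
  have hlim : Tendsto (P ∘ c) atTop (𝓝 (P 0)) := (hP 0).continuousAt.tendsto.comp hc_lim
  refine ⟨integrableOn_Ioi_deriv_of_nonneg' hderiv hnonneg hlim, ?_⟩
  rw [integral_Ioi_of_hasDerivAt_of_nonneg' hderiv hnonneg hlim,
    wallisIntegral_eq_integral_one_sub_sq_pow]
  simp [P, hc_zero]

theorem hasSum_mul_wallisIntegral {a : ℕ → ℝ} {G : ℝ → ℝ}
    (hc : ∀ x ∈ Ici (0 : ℝ), HasDerivAt c (-g x) x) (hc_zero : c 0 = 1)
    (hc_lim : Tendsto c atTop (𝓝 0)) (hc_sq : ∀ x ∈ Ioi (0 : ℝ), c x ^ 2 ≤ 1)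
    (hg : ∀ x ∈ Ioi (0 : ℝ), 0 ≤ g x) (ha : ∀ n, 0 ≤ a n) (hG : IntegrableOn G (Ioi 0))
    (hsum : ∀ x ∈ Ioi (0 : ℝ), HasSum (fun n => a n * ((1 - c x ^ 2) ^ n * g x)) (G x)) :
    HasSum (fun n => a n * wallisIntegral n) (∫ x in Ioi (0 : ℝ), G x) := by
  have hW := integrableOn_and_integral_one_sub_sq_pow_mul_eq_wallisIntegral
    hc hc_zero hc_lim hc_sq hg
  simp only [← (hW _).2, ← integral_const_mul]
  refine hasSum_integral_of_nonneg (fun n => ((hW n).1.const_mul (a n)).1) (fun n => ?_) hG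
    ((ae_restrict_mem measurableSet_Ioi).mono hsum)
  filter_upwards [ae_restrict_mem measurableSet_Ioi] with x hx
  exact mul_nonneg (ha n) (mul_nonneg (pow_nonneg (sub_nonneg.2 (hc_sq x hx)) n) (hg x hx))

theorem tendsto_inv_cosh_atTop : Tendsto (fun x => (cosh x)⁻¹) atTop (𝓝 0) := by
  refine Tendsto.inv_tendsto_atTop <|
    tendsto_atTop_mono (fun x => ?_) (tendsto_exp_atTop.atTop_div_const two_pos)
  rw [cosh_eq]
  linarith [exp_pos (-x)]

theorem hasSum_mul_wallisIntegral_of_tanh {a : ℕ → ℝ} {G : ℝ → ℝ} (ha : ∀ n, 0 ≤ a n)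
    (hG : IntegrableOn G (Ioi 0))
    (hsum : ∀ x > 0, HasSum (fun n => a n * (tanh x ^ (2 * n + 1) / cosh x)) (G x)) :
    HasSum (fun n => a n * wallisIntegral n) (∫ x in Ioi (0 : ℝ), G x) := by
  refine hasSum_mul_wallisIntegral (c := fun x => (cosh x)⁻¹) (g := fun x => sinh x / cosh x ^ 2)
    (fun x _ => ?_) (by simp) tendsto_inv_cosh_atTop (fun x _ => ?_) (fun x hx => ?_) ha hG
    fun x hx => ?_
  · exact ((hasDerivAt_cosh x).inv (cosh_pos x).ne').congr_deriv (by ring)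
  · exact pow_le_one₀ (inv_nonneg.2 (cosh_pos x).le) (inv_le_one_of_one_le₀ (one_le_cosh x))
  · exact div_nonneg (sinh_nonneg_iff.2 (le_of_lt hx)) (sq_nonneg _)
  · have tanh_sq : 1 - (cosh x)⁻¹ ^ 2 = tanh x ^ 2 := by
      have := (cosh_pos x).ne'
      rw [tanh_eq_sinh_div_cosh]
      field_simp
      linarith [cosh_sq x]
    convert! hsum x hx using 3 with n
    rw [tanh_sq, ← pow_mul, pow_succ, tanh_eq_sinh_div_cosh]
    ring

theorem hasSum_mul_wallisIntegral_of_exp {a : ℕ → ℝ} {G : ℝ → ℝ} (ha : ∀ n, 0 ≤ a n)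
    (hG : IntegrableOn G (Ioi 0))
    (hsum : ∀ x > 0, HasSum (fun n => a n * ((1 - exp (-x) ^ 2) ^ n * exp (-x))) (G x)) :
    HasSum (fun n => a n * wallisIntegral n) (∫ x in Ioi (0 : ℝ), G x) := by
  refine hasSum_mul_wallisIntegral (fun x _ => ?_) (by simp) tendsto_exp_neg_atTop_nhds_zero
    (fun x hx => ?_) (fun x _ => (exp_pos _).le) ha hG hsum
  · exact (hasDerivAt_neg x).exp.congr_deriv (by ring)
  · exact pow_le_one₀ (exp_pos _).le (exp_le_one_iff.2 (neg_nonpos.2 (le_of_lt hx)))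

end HalfLineSubstitution

theorem hasSum_oddHarmonic_succ_div_mul_wallisIntegral :
    HasSum (fun n : ℕ => oddHarmonic (n + 1) / (2 * n + 2) * wallisIntegral n)
      (7 / 4 * ∑' n : ℕ, 1 / ((n : ℝ) + 1) ^ 3) := by
  have hzeta : HasSum (fun n : ℕ => 1 / (n : ℝ) ^ (2 + 1)) (∑' n : ℕ, 1 / ((n : ℝ) + 1) ^ 3) := by
    have h : Summable fun n : ℕ => 1 / (n : ℝ) ^ 3 := summable_one_div_nat_pow.2 (by norm_num)
    have tsum_shift : ∑' n : ℕ, 1 / (n : ℝ) ^ 3 = ∑' n : ℕ, 1 / ((n : ℝ) + 1) ^ 3 := by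
      rw [h.tsum_eq_zero_add]
      simp
    exact tsum_shift ▸ h.hasSum
  have integral_eq := integral_pow_mul_inv_two_mul_sinh two_ne_zero hzeta
  convert! hasSum_mul_wallisIntegral_of_tanh (fun n => ?_)
    (integrableOn_pow_mul_inv_two_mul_sinh two_ne_zero) fun x hx => ?_ using 1
  · rw [integral_eq, Nat.factorial_two]
    push_cast
    ring
  · exact div_nonneg (oddHarmonic_nonneg _) (by positivity)
  · have hsinh : sinh x ≠ 0 := (sinh_pos_iff.2 hx).ne'
    have hcosh : cosh x ≠ 0 := (cosh_pos x).ne'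
    have h := (hasSum_artanh_sq (abs_tanh_lt_one x)).mul_right (2 * sinh x)⁻¹
    rw [artanh_tanh] at h
    convert! h using 2 with n
    rw [tanh_eq_sinh_div_cosh, div_pow, div_pow]
    field_simp
    ring

theorem hasSum_one_div_odd_mul_wallisIntegral :
    HasSum (fun n : ℕ => 1 / (2 * n + 1) * wallisIntegral n)
      (2 * ∑' k : ℕ, (-1 : ℝ) ^ k / (2 * (k : ℝ) + 1) ^ 2) := by
  obtain ⟨integrable, hasSum_integral⟩ :=
    integrableOn_and_hasSum_integral_pow_mul_inv_two_mul_cosh one_ne_zero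
  have tsum_eq := hasSum_integral.tsum_eq
  simp only [Nat.factorial_one, Nat.cast_one, one_mul, Nat.reduceAdd] at tsum_eq
  convert! hasSum_mul_wallisIntegral_of_tanh (fun n => ?_) (integrable.const_mul 2)
    fun x _ => ?_ using 1
  · rw [integral_const_mul, ← tsum_eq]
  · positivity
  · have h := (hasSum_artanh (abs_tanh_lt_one x)).mul_right (cosh x)⁻¹
    rw [artanh_tanh] at h
    have hG : 2 * (x ^ 1 * (2 * cosh x)⁻¹) = x * (cosh x)⁻¹ := by
      rw [mul_inv]
      ring
    rw [hG]
    convert! h using 2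
    ring

theorem inv_two_mul_sinh (x : ℝ) : (2 * sinh x)⁻¹ = exp (-x) / (1 - exp (-x) ^ 2) := by
  have hexp : exp (-x) * exp x = 1 := by rw [← exp_add, neg_add_cancel, exp_zero]
  have hden : 1 - exp (-x) ^ 2 = exp (-x) * (2 * sinh x) := by
    rw [sinh_eq]
    linear_combination -hexp
  rw [hden, div_mul_cancel_left₀ (exp_pos _).ne']

theorem hasSum_one_div_even_mul_wallisIntegral :
    HasSum (fun n : ℕ => 1 / (2 * n + 2) * wallisIntegral n) (π ^ 2 / 8) := by
  have integral_eq := integral_pow_mul_inv_two_mul_sinh one_ne_zero hasSum_zeta_two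
  convert! hasSum_mul_wallisIntegral_of_exp (fun n => ?_)
    (integrableOn_pow_mul_inv_two_mul_sinh one_ne_zero) fun x hx => ?_ using 1
  · rw [integral_eq, Nat.factorial_one]
    push_cast
    ring
  · positivity
  · have exp_lt : exp (-x) < 1 := exp_lt_one_iff.2 (neg_neg_of_pos hx)
    have sq_lt : exp (-x) ^ 2 < 1 := pow_lt_one₀ (exp_pos _).le exp_lt two_ne_zero
    have habs : |1 - exp (-x) ^ 2| < 1 := by
      rw [abs_of_pos (sub_pos.2 sq_lt)]
      linarith [pow_pos (exp_pos (-x)) 2]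
    have hden : 1 - exp (-x) ^ 2 ≠ 0 := (sub_pos.2 sq_lt).ne'
    have hlog : -log (1 - (1 - exp (-x) ^ 2)) = 2 * x := by
      rw [sub_sub_cancel, log_pow, log_exp]
      ring
    have h := (hasSum_pow_div_log_of_abs_lt_one habs).mul_right
      (exp (-x) / (2 * (1 - exp (-x) ^ 2)))
    rw [hlog] at h
    have hG : x ^ 1 * (2 * sinh x)⁻¹ = 2 * x * (exp (-x) / (2 * (1 - exp (-x) ^ 2))) := by
      rw [inv_two_mul_sinh]
      field_simp
    rw [hG]
    convert! h using 2 with n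
    field_simp
    ring

theorem hasSum_oddHarmonic_div_mul_wallisIntegral :
    HasSum (fun n : ℕ => oddHarmonic n / (2 * n + 2) * wallisIntegral n)
      (π ^ 2 / 8 - 2 * (∑' k : ℕ, (-1 : ℝ) ^ k / (2 * (k : ℝ) + 1) ^ 2) +
        7 / 4 * ∑' n : ℕ, 1 / ((n : ℝ) + 1) ^ 3) := by
  convert! (hasSum_one_div_even_mul_wallisIntegral.sub hasSum_one_div_odd_mul_wallisIntegral).add
    hasSum_oddHarmonic_succ_div_mul_wallisIntegral using 2 with n
  rw [oddHarmonic_succ]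
  field_simp
  ring

/-- The reindexing `(n, k) ↦ (n + 1, k + 1)` of the pairs `n₁ > n₂ ≥ 1`, with zero-based inner index
`k < n`. -/
def sigmaFinEquivOneLeLt : (Σ n : ℕ, Fin n) ≃ {p : ℕ × ℕ // p.2 < p.1 ∧ 1 ≤ p.2} where
  toFun x := ⟨(x.1 + 1, x.2 + 1), by simp⟩
  invFun p := ⟨p.1.1 - 1, p.1.2 - 1, by have := p.2; omega⟩
  left_inv x := by simp
  right_inv := by
    rintro ⟨⟨m, k⟩, hkm, hk⟩
    simp only [Subtype.mk.injEq, Prod.mk.injEq]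
    dsimp only at hkm hk
    omega

theorem tsum_one_le_lt_eq_of_hasSum_sum_range {f : ℕ → ℕ → ℝ} {S : ℝ}
    (hf : ∀ n, ∀ k < n, 0 ≤ f (n + 1) (k + 1))
    (h : HasSum (fun n => ∑ k ∈ Finset.range n, f (n + 1) (k + 1)) S) :
    ∑' p : {p : ℕ × ℕ // p.2 < p.1 ∧ 1 ≤ p.2}, f p.1.1 p.1.2 = S := by
  let F : (Σ n : ℕ, Fin n) → ℝ := fun x => f (x.1 + 1) (x.2 + 1)
  have hF_nonneg : ∀ x, 0 ≤ F x := fun x => hf x.1 x.2 x.2.isLt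
  have hF_fiber (n : ℕ) :
      HasSum (fun k : Fin n => F ⟨n, k⟩) (∑ k ∈ Finset.range n, f (n + 1) (k + 1)) := by
    rw [Finset.sum_range]
    exact hasSum_fintype _
  have hF_summable : Summable F := by
    rw [summable_sigma_of_nonneg hF_nonneg]
    refine ⟨fun n => (hF_fiber n).summable, ?_⟩
    simpa only [(hF_fiber _).tsum_eq] using h.summable
  rw [← sigmaFinEquivOneLeLt.tsum_eq]
  exact (HasSum.sigma_of_hasSum h hF_fiber hF_summable).tsum_eq

/-- `∑_{n₁ > n₂ ≥ 1} 4^{n₁}/(binom(2n₁,n₁)(2n₁)²(2n₂−1)) = π²/8 − 2G + (7/4)ζ(3)`. -/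
theorem stmt15 :
    (∑' p : {p : ℕ × ℕ // p.2 < p.1 ∧ 1 ≤ p.2},
      (4 : ℝ) ^ p.1.1 /
        ((Nat.choose (2 * p.1.1) p.1.1 : ℝ) * (2 * (p.1.1 : ℝ)) ^ 2 *
          (2 * (p.1.2 : ℝ) - 1))) =
    π ^ 2 / 8 - 2 * (∑' k : ℕ, (-1 : ℝ) ^ k / (2 * (k : ℝ) + 1) ^ 2) +
      7 / 4 * ∑' n : ℕ, 1 / ((n : ℝ) + 1) ^ 3 := by
  refine tsum_one_le_lt_eq_of_hasSum_sum_range (f := fun n₁ n₂ => 4 ^ n₁ /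
    ((2 * n₁).choose n₁ * (2 * n₁) ^ 2 * (2 * n₂ - 1) : ℝ)) (fun n k _ => ?_) ?_
  · have : (0 : ℝ) ≤ 2 * (k + 1 : ℕ) - 1 := by push_cast; linarith
    positivity
  convert! hasSum_oddHarmonic_div_mul_wallisIntegral using 2 with n
  rw [wallisIntegral_eq_four_pow_div, oddHarmonic, Finset.sum_div, Finset.sum_mul]
  refine Finset.sum_congr rfl fun k _ => ?_
  rw [Nat.centralBinom_eq_two_mul_choose]
  have odd_eq : (2 * (k + 1 : ℕ) - 1 : ℝ) = 2 * k + 1 := by push_cast; ring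
  rw [odd_eq]
  push_cast
  field_simp
end

section
/- We have ∑_{n₁ ≥ n₂ ≥ n₃ ≥ 1} 4^{n₁} / (binom(2n₁, n₁) · n₁² · (2n₂+1) · (2n₃−1)) = 7 ζ(3) + 8G² − 8G, where G = ∑_{k=0}^∞ (−1)^k/(2k+1)² is Catalan's constant, ζ(3) = ∑_{n=1}^∞ 1/n³, and the triple sum is over integers n₁ ≥ n₂ ≥ n₃ ≥ 1. -/
open Real

/-!
The substitution `s = tan (θ / 2)` turns the moments
`I n k = ∫₀¹ ((1 - s²) / (1 + s²)) ^ n * s ^ (2 * k) ds` into trigonometric integrals. They satisfy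
two recurrences, an algebraic one and one from integration by parts:
* `I n k - I n (k + 1) = I (n + 1) k + I (n + 1) (k + 1)`,
* `(n + 1) * (I n k - I (n + 2) k) = (2 * k + 1) * I (n + 1) k`.

Put `A r n = ∑ₖ I n k / (2 * k + 1) ^ r`. The first recurrence makes `A 0 n` telescope to a Wallis
integral, so that `4 ^ n / (n * binom (2 * n) n) = 4 * A 0 (2 * n)`. The second one says
`(n + 1) * (A (r + 1) n - A (r + 1) (n + 2)) = A r (n + 1)`, whence the sums over `n₁` and then
`n₂` telescope as well. What remains is a series over `n₃` in `A 2`, `A 1` and `A 0`; exchanging it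
with the sum over `k` yields the contributions `8 G²`, `7 ζ(3)` and `-8 G` respectively.

Catalan's constant enters through `h k = ∑ⱼ I (2 * j + 2) k / (2 * j + 1)`, which satisfies
`h k + h (k + 1) = 1 / (2 * k + 1) ^ 2 - 1 / (2 * k + 3) ^ 2`. Hence `(-1) ^ k * h k` is the sum of
two consecutive tails of the series of `G`, and both `∑ h k = G` and `∑ h k / (2 * k + 1) ^ 2 = G²`
telescope.
-/

section

open Filter Topology MeasureTheory

/-! ### Sequences and series of real numbers -/

lemma tendsto_two_mul_add_atTop (c : ℕ) : Tendsto (fun i : ℕ ↦ 2 * i + c) atTop atTop :=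
  (tendsto_add_atTop_nat c).comp (tendsto_id.const_mul_atTop' two_pos)

lemma hasSum_nat_add_of_eq_sub_succ {f x : ℕ → ℝ} (hf : ∀ k, 0 ≤ f k)
    (h : ∀ k, f k = x k - x (k + 1)) (hx : Tendsto x atTop (𝓝 0)) (m : ℕ) :
    HasSum (fun k ↦ f (k + m)) (x m) := by
  rw [hasSum_iff_tendsto_nat_of_nonneg fun k ↦ hf (k + m)]
  have partialSum (n : ℕ) : ∑ k ∈ Finset.range n, f (k + m) = x m - x (n + m) := by
    simp only [h, add_right_comm _ m 1]
    simpa only [zero_add] using Finset.sum_range_sub' (fun k ↦ x (k + m)) n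
  simp only [partialSum]
  simpa using tendsto_const_nhds.sub ((tendsto_add_atTop_iff_nat m).2 hx)

lemma hasSum_of_eq_sub_succ {f x : ℕ → ℝ} (hf : ∀ k, 0 ≤ f k)
    (h : ∀ k, f k = x k - x (k + 1)) (hx : Tendsto x atTop (𝓝 0)) : HasSum f (x 0) :=
  hasSum_nat_add_of_eq_sub_succ hf h hx 0

lemma hasSum_prod_of_nonneg {β γ : Type*} {f : β × γ → ℝ} {a : β → ℝ} {s : ℝ}
    (hf : ∀ p, 0 ≤ f p) (hrow : ∀ i, HasSum (fun j ↦ f (i, j)) (a i)) (ha : HasSum a s) :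
    HasSum f s := by
  have hsum : Summable f := (summable_prod_of_nonneg hf).2
    ⟨fun i ↦ (hrow i).summable, by simpa only [(hrow _).tsum_eq] using ha.summable⟩
  exact (hsum.hasSum.prod_fiberwise hrow).unique ha ▸ hsum.hasSum

lemma hasSum_comm_of_nonneg {β γ : Type*} {f : β → γ → ℝ} {a : β → ℝ} {b : γ → ℝ} {s : ℝ}
    (hf : ∀ i j, 0 ≤ f i j) (hrow : ∀ i, HasSum (f i) (a i))
    (hcol : ∀ j, HasSum (fun i ↦ f i j) (b j)) (ha : HasSum a s) : HasSum b s := by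
  have hprod : HasSum (fun p : β × γ ↦ f p.1 p.2) s :=
    hasSum_prod_of_nonneg (fun p ↦ hf p.1 p.2) hrow ha
  exact ((Equiv.prodComm γ β).hasSum_iff.2 hprod).prod_fiberwise hcol

lemma hasSum_one_div_odd_pow_s16 {m : ℕ} (hm : 1 < m) :
    HasSum (fun k : ℕ ↦ 1 / (2 * (k : ℝ) + 1) ^ m)
      ((1 - 1 / 2 ^ m) * ∑' n : ℕ, 1 / ((n : ℝ) + 1) ^ m) := by
  have hs : Summable fun n : ℕ ↦ 1 / ((n : ℝ) + 1) ^ m := by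
    simpa using (summable_nat_add_iff 1).2 (Real.summable_one_div_nat_pow.2 hm)
  set z := ∑' n : ℕ, 1 / ((n : ℝ) + 1) ^ m
  have hodd : Summable fun k : ℕ ↦ 1 / (((2 * k : ℕ) : ℝ) + 1) ^ m :=
    hs.comp_injective (i := fun k ↦ 2 * k) fun a b h ↦ by simpa using h
  have heven : HasSum (fun k : ℕ ↦ 1 / (((2 * k + 1 : ℕ) : ℝ) + 1) ^ m) (1 / 2 ^ m * z) := by
    refine (hs.hasSum.mul_left (1 / 2 ^ m)).congr_fun fun k ↦ ?_
    push_cast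
    rw [show 2 * (k : ℝ) + 1 + 1 = 2 * (k + 1) by ring, mul_pow, one_div_mul_one_div]
  have hsplit := (hodd.hasSum.even_add_odd (f := fun n : ℕ ↦ 1 / ((n : ℝ) + 1) ^ m) heven).unique
    hs.hasSum
  rw [show (1 - 1 / 2 ^ m) * z = ∑' k : ℕ, 1 / (((2 * k : ℕ) : ℝ) + 1) ^ m by linarith]
  exact_mod_cast hodd.hasSum

lemma tendsto_one_div_odd_pow {m : ℕ} (hm : m ≠ 0) :
    Tendsto (fun k : ℕ ↦ 1 / (2 * (k : ℝ) + 1) ^ m) atTop (𝓝 0) := by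
  have hlin : Tendsto (fun k : ℕ ↦ 2 * (k : ℝ) + 1) atTop atTop :=
    tendsto_atTop_add_const_right _ _ (tendsto_natCast_atTop_atTop.const_mul_atTop two_pos)
  simp only [one_div]
  exact ((tendsto_pow_atTop hm).comp hlin).inv_tendsto_atTop

/-! ### Tails of alternating series -/

/-- The tail `∑_{i ≥ k} (-1)ⁱ aᵢ` of the alternating series of `a`; the full series is its value
at `0`. -/
noncomputable def alternatingTail (a : ℕ → ℝ) (k : ℕ) : ℝ := ∑' i, (-1) ^ (i + k) * a (i + k)

section AlternatingTail

variable {a h : ℕ → ℝ}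

lemma alternatingTail_eq_add_succ (ha : Summable a) (k : ℕ) :
    alternatingTail a k = (-1) ^ k * a k + alternatingTail a (k + 1) := by
  have hs : Summable fun i ↦ (-1) ^ i * a i := ha.alternating
  simpa only [alternatingTail, zero_add, add_right_comm _ 1 k, add_assoc] using
    ((summable_nat_add_iff k).2 hs).tsum_eq_zero_add

lemma tendsto_alternatingTail (a : ℕ → ℝ) : Tendsto (alternatingTail a) atTop (𝓝 0) :=
  tendsto_sum_nat_add fun i ↦ (-1) ^ i * a i

lemma neg_one_pow_mul_eq_alternatingTail_add (ha : Summable a)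
    (hh : ∀ k, h k + h (k + 1) = a k - a (k + 1)) (hlim : Tendsto h atTop (𝓝 0)) (k : ℕ) :
    (-1) ^ k * h k = alternatingTail a k + alternatingTail a (k + 1) := by
  set R := alternatingTail a
  set d : ℕ → ℝ := fun k ↦ (-1) ^ k * h k - (R k + R (k + 1)) with hd
  have d_sub_succ (k : ℕ) : 0 = d k - d (k + 1) := by
    have h₁ := alternatingTail_eq_add_succ ha k
    have h₂ := alternatingTail_eq_add_succ ha (k + 1)
    simp only [hd]
    linear_combination h₁ + h₂ - (-1) ^ k * hh k
  have d_lim : Tendsto d atTop (𝓝 0) := by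
    have hsigned : Tendsto (fun k ↦ (-1) ^ k * h k) atTop (𝓝 0) :=
      squeeze_zero_norm (fun k ↦ by simp) (tendsto_zero_iff_norm_tendsto_zero.1 hlim)
    have hR := tendsto_alternatingTail a
    simpa using hsigned.sub (hR.add (hR.comp (tendsto_add_atTop_nat 1)))
  have d_zero : d k = 0 :=
    (hasSum_nat_add_of_eq_sub_succ (fun _ ↦ le_rfl) d_sub_succ d_lim k).unique hasSum_zero
  exact sub_eq_zero.1 d_zero

lemma hasSum_of_add_succ_eq_sub_succ (ha : Summable a) (hnonneg : ∀ k, 0 ≤ h k)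
    (hh : ∀ k, h k + h (k + 1) = a k - a (k + 1)) (hlim : Tendsto h atTop (𝓝 0)) :
    HasSum h (alternatingTail a 0) := by
  have key : (h 0 + a 0) / 2 = alternatingTail a 0 := by
    have h₁ := neg_one_pow_mul_eq_alternatingTail_add ha hh hlim 0
    have h₂ := alternatingTail_eq_add_succ ha 0
    simp only [pow_zero, one_mul] at h₁ h₂
    linarith
  rw [← key]
  refine hasSum_of_eq_sub_succ (x := fun k ↦ (h k + a k) / 2) hnonneg (fun k ↦ ?_) ?_
  · linarith [hh k]
  · simpa using (hlim.add ha.tendsto_atTop_zero).div_const 2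

lemma hasSum_mul_of_add_succ_eq_sub_succ (ha : Summable a) (hmul : ∀ k, 0 ≤ h k * a k)
    (hh : ∀ k, h k + h (k + 1) = a k - a (k + 1)) (hlim : Tendsto h atTop (𝓝 0)) :
    HasSum (fun k ↦ h k * a k) (alternatingTail a 0 ^ 2) := by
  refine hasSum_of_eq_sub_succ (x := fun k ↦ alternatingTail a k ^ 2) hmul (fun k ↦ ?_) ?_
  · have hsum := neg_one_pow_mul_eq_alternatingTail_add ha hh hlim k
    have hdiff : (-1) ^ k * a k = alternatingTail a k - alternatingTail a (k + 1) :=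
      (sub_eq_of_eq_add (alternatingTail_eq_add_succ ha k)).symm
    rw [sq_sub_sq, ← hsum, ← hdiff, mul_mul_mul_comm, ← mul_pow]
    norm_num
  · simpa using (tendsto_alternatingTail a).pow 2

end AlternatingTail

/-! ### Half-angle moments -/

/-- `cos θ` as a rational function of `s = tan (θ / 2)`. -/
noncomputable def halfAngleCos (s : ℝ) : ℝ := (1 - s ^ 2) / (1 + s ^ 2)

lemma halfAngleCos_mul (s : ℝ) : halfAngleCos s * (1 + s ^ 2) = 1 - s ^ 2 :=
  div_mul_cancel₀ _ (by positivity)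

lemma continuous_halfAngleCos : Continuous halfAngleCos :=
  Continuous.div (by fun_prop) (by fun_prop) fun s ↦ by positivity

lemma halfAngleCos_nonneg {s : ℝ} (hs : s ∈ Set.Icc 0 1) : 0 ≤ halfAngleCos s :=
  div_nonneg (sub_nonneg.2 (pow_le_one₀ hs.1 hs.2)) (by positivity)

lemma halfAngleCos_lt_one {s : ℝ} (hs : s ≠ 0) : halfAngleCos s < 1 := by
  rw [halfAngleCos, div_lt_one (by positivity)]
  linarith [sq_pos_of_ne_zero hs]

lemma halfAngleCos_le_one (s : ℝ) : halfAngleCos s ≤ 1 := by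
  rw [halfAngleCos, div_le_one (by positivity)]
  linarith [sq_nonneg s]

lemma one_sub_halfAngleCos_sq (s : ℝ) :
    1 - halfAngleCos s ^ 2 = 4 * s ^ 2 / (1 + s ^ 2) ^ 2 := by
  rw [halfAngleCos]
  field_simp
  ring

lemma hasDerivAt_halfAngleCos (s : ℝ) :
    HasDerivAt halfAngleCos (-4 * s / (1 + s ^ 2) ^ 2) s := by
  have hnum : HasDerivAt (fun s : ℝ ↦ 1 - s ^ 2) (-(2 * s)) s := by
    simpa using (hasDerivAt_pow 2 s).const_sub 1
  have hden : HasDerivAt (fun s : ℝ ↦ 1 + s ^ 2) (2 * s) s := by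
    simpa using (hasDerivAt_pow 2 s).const_add 1
  refine (hnum.fun_div hden (by positivity)).congr_deriv ?_
  field_simp
  ring

/-- The moment `∫₀¹ cosⁿ θ * s ^ (2 * k) ds`, where `s = tan (θ / 2)`. It plays the role of the
connector in the method of connected sums: its recurrences relate sums over `n` to sums over `k`. -/
noncomputable def halfAngleMoment (n k : ℕ) : ℝ :=
  ∫ s in (0 : ℝ)..1, halfAngleCos s ^ n * s ^ (2 * k)

lemma intervalIntegrable_halfAngleMoment (n k : ℕ) :
    IntervalIntegrable (fun s ↦ halfAngleCos s ^ n * s ^ (2 * k)) volume 0 1 :=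
  ((continuous_halfAngleCos.pow n).mul (continuous_pow _)).intervalIntegrable _ _

lemma halfAngleMoment_zero_left (k : ℕ) : halfAngleMoment 0 k = 1 / (2 * k + 1) := by
  simp [halfAngleMoment, integral_pow]

lemma halfAngleMoment_nonneg (n k : ℕ) : 0 ≤ halfAngleMoment n k :=
  intervalIntegral.integral_nonneg zero_le_one fun _ hs ↦
    mul_nonneg (pow_nonneg (halfAngleCos_nonneg hs) n) (pow_nonneg hs.1 _)

lemma antitone_halfAngleMoment (k : ℕ) : Antitone fun n ↦ halfAngleMoment n k := by
  refine antitone_nat_of_succ_le fun n ↦ intervalIntegral.integral_mono_on zero_le_one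
    (intervalIntegrable_halfAngleMoment _ _) (intervalIntegrable_halfAngleMoment _ _) fun s hs ↦ ?_
  exact mul_le_mul_of_nonneg_right
    (pow_le_pow_of_le_one (halfAngleCos_nonneg hs) (halfAngleCos_le_one s) n.le_succ)
    (pow_nonneg hs.1 _)

lemma halfAngleMoment_le (n k : ℕ) : halfAngleMoment n k ≤ 1 / (2 * k + 1) :=
  (antitone_halfAngleMoment k n.zero_le).trans_eq (halfAngleMoment_zero_left k)

lemma tendsto_halfAngleMoment_right (n : ℕ) :
    Tendsto (fun k ↦ halfAngleMoment n k) atTop (𝓝 0) :=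
  squeeze_zero (halfAngleMoment_nonneg n) (halfAngleMoment_le n)
    (by simpa only [pow_one] using tendsto_one_div_odd_pow one_ne_zero)

lemma tendsto_halfAngleMoment_left (k : ℕ) :
    Tendsto (fun n ↦ halfAngleMoment n k) atTop (𝓝 0) := by
  have hlim := intervalIntegral.tendsto_integral_filter_of_dominated_convergence
    (μ := volume) (a := 0) (b := 1) (l := atTop)
    (F := fun (n : ℕ) s ↦ halfAngleCos s ^ n * s ^ (2 * k)) (f := fun _ ↦ 0) (fun _ ↦ 1)
    (Eventually.of_forall fun n ↦
      ((continuous_halfAngleCos.pow n).mul (continuous_pow _)).aestronglyMeasurable)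
    (Eventually.of_forall fun n ↦ Eventually.of_forall fun s hs ↦ ?_)
    intervalIntegrable_const (Eventually.of_forall fun s hs ↦ ?_)
  · simpa only [intervalIntegral.integral_zero, halfAngleMoment] using hlim
  · rw [Set.uIoc_of_le zero_le_one] at hs
    have hcos := halfAngleCos_nonneg (Set.Ioc_subset_Icc_self hs)
    rw [Real.norm_of_nonneg (mul_nonneg (pow_nonneg hcos n) (pow_nonneg hs.1.le _))]
    exact mul_le_one₀ (pow_le_one₀ hcos (halfAngleCos_le_one s)) (pow_nonneg hs.1.le _)
      (pow_le_one₀ hs.1.le hs.2)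
  · rw [Set.uIoc_of_le zero_le_one] at hs
    have hcos := halfAngleCos_nonneg (Set.Ioc_subset_Icc_self hs)
    simpa only [zero_mul] using (tendsto_pow_atTop_nhds_zero_of_lt_one hcos
      (halfAngleCos_lt_one hs.1.ne')).mul_const (s ^ (2 * k))

lemma halfAngleMoment_sub_right_succ (n k : ℕ) :
    halfAngleMoment n k - halfAngleMoment n (k + 1) =
      halfAngleMoment (n + 1) k + halfAngleMoment (n + 1) (k + 1) := by
  simp only [halfAngleMoment]
  rw [← intervalIntegral.integral_sub (intervalIntegrable_halfAngleMoment _ _)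
      (intervalIntegrable_halfAngleMoment _ _),
    ← intervalIntegral.integral_add (intervalIntegrable_halfAngleMoment _ _)
      (intervalIntegrable_halfAngleMoment _ _)]
  refine intervalIntegral.integral_congr fun s _ ↦ ?_
  linear_combination -halfAngleCos s ^ n * s ^ (2 * k) * halfAngleCos_mul s

lemma hasDerivAt_halfAngleCos_pow_mul_pow (n k : ℕ) (s : ℝ) :
    HasDerivAt (fun s ↦ halfAngleCos s ^ (n + 1) * s ^ (2 * k + 1))
      ((2 * k + 1) * (halfAngleCos s ^ (n + 1) * s ^ (2 * k)) -
        (n + 1) * (halfAngleCos s ^ n * s ^ (2 * k) - halfAngleCos s ^ (n + 2) * s ^ (2 * k)))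
      s := by
  refine (((hasDerivAt_halfAngleCos s).fun_pow (n + 1)).fun_mul
    (hasDerivAt_pow (2 * k + 1) s)).congr_deriv ?_
  push_cast
  linear_combination (n + 1) * halfAngleCos s ^ n * s ^ (2 * k) * one_sub_halfAngleCos_sq s

lemma halfAngleMoment_sub_left_add_two (n k : ℕ) :
    (n + 1) * (halfAngleMoment n k - halfAngleMoment (n + 2) k) =
      (2 * k + 1) * halfAngleMoment (n + 1) k := by
  have hint (n : ℕ) := intervalIntegrable_halfAngleMoment n k
  have hderiv := intervalIntegral.integral_eq_sub_of_hasDerivAt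
    (fun s _ ↦ hasDerivAt_halfAngleCos_pow_mul_pow n k s)
    (((hint _).const_mul _).sub (((hint _).sub (hint _)).const_mul _))
  have hboundary : halfAngleCos 1 = 0 := by simp [halfAngleCos]
  rw [intervalIntegral.integral_sub ((hint _).const_mul _) (((hint _).sub (hint _)).const_mul _),
    intervalIntegral.integral_const_mul, intervalIntegral.integral_const_mul,
    intervalIntegral.integral_sub (hint _) (hint _), hboundary] at hderiv
  simp only [halfAngleMoment]
  rw [zero_pow (by lia), zero_pow (by lia)] at hderiv
  linarith

lemma hasSum_halfAngleMoment_odd (k : ℕ) :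
    HasSum (fun j : ℕ ↦ halfAngleMoment (2 * j + 1) k / (2 * j + 1)) (1 / (2 * k + 1) ^ 2) := by
  have hfirst : halfAngleMoment (2 * 0) k / (2 * k + 1) = 1 / (2 * k + 1) ^ 2 := by
    rw [mul_zero, halfAngleMoment_zero_left, div_div, sq]
  rw [← hfirst]
  refine hasSum_of_eq_sub_succ (x := fun j ↦ halfAngleMoment (2 * j) k / (2 * k + 1))
    (fun j ↦ div_nonneg (halfAngleMoment_nonneg _ _) (by positivity)) (fun j ↦ ?_) ?_
  · have hrec := halfAngleMoment_sub_left_add_two (2 * j) k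
    push_cast at hrec
    rw [← sub_div, div_eq_div_iff (by positivity) (by positivity), mul_add_one 2 j]
    linarith
  · simpa using ((tendsto_halfAngleMoment_left k).comp
      (tendsto_two_mul_add_atTop 0)).div_const (2 * (k : ℝ) + 1)

/-- The companion `∑ⱼ I (2 * j + 2) k / (2 * j + 1)` of the series in `hasSum_halfAngleMoment_odd`.
Its weighted sums over `k` give Catalan's constant and its square. -/
noncomputable def evenMomentSum (k : ℕ) : ℝ :=
  ∑' j : ℕ, halfAngleMoment (2 * j + 2) k / (2 * j + 1)

lemma halfAngleMoment_even_div_nonneg (j k : ℕ) :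
    0 ≤ halfAngleMoment (2 * j + 2) k / (2 * j + 1) :=
  div_nonneg (halfAngleMoment_nonneg _ _) (by positivity)

lemma halfAngleMoment_even_div_le (j k : ℕ) :
    halfAngleMoment (2 * j + 2) k / (2 * j + 1) ≤ halfAngleMoment (2 * j + 1) k / (2 * j + 1) :=
  div_le_div_of_nonneg_right (antitone_halfAngleMoment k (Nat.le_succ _)) (by positivity)

lemma hasSum_evenMomentSum (k : ℕ) :
    HasSum (fun j : ℕ ↦ halfAngleMoment (2 * j + 2) k / (2 * j + 1)) (evenMomentSum k) :=
  (Summable.of_nonneg_of_le (halfAngleMoment_even_div_nonneg · k)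
    (halfAngleMoment_even_div_le · k) (hasSum_halfAngleMoment_odd k).summable).hasSum

lemma evenMomentSum_nonneg (k : ℕ) : 0 ≤ evenMomentSum k :=
  tsum_nonneg (halfAngleMoment_even_div_nonneg · k)

lemma tendsto_evenMomentSum : Tendsto evenMomentSum atTop (𝓝 0) :=
  squeeze_zero evenMomentSum_nonneg
    (fun k ↦ hasSum_le (halfAngleMoment_even_div_le · k) (hasSum_evenMomentSum k)
      (hasSum_halfAngleMoment_odd k))
    (tendsto_one_div_odd_pow two_ne_zero)

lemma evenMomentSum_add_succ (k : ℕ) :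
    evenMomentSum k + evenMomentSum (k + 1) =
      1 / (2 * (k : ℝ) + 1) ^ 2 - 1 / (2 * ((k + 1 : ℕ) : ℝ) + 1) ^ 2 := by
  refine ((hasSum_evenMomentSum k).add (hasSum_evenMomentSum (k + 1))).unique
    (((hasSum_halfAngleMoment_odd k).sub
      (hasSum_halfAngleMoment_odd (k + 1))).congr_fun fun j ↦ ?_)
  rw [← add_div, ← sub_div, halfAngleMoment_sub_right_succ]

/-- Catalan's constant `G = 1 - 1/3² + 1/5² - ⋯`. -/
noncomputable def catalanConstant : ℝ := ∑' k : ℕ, (-1) ^ k / (2 * (k : ℝ) + 1) ^ 2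

lemma alternatingTail_one_div_odd_sq :
    alternatingTail (fun k : ℕ ↦ 1 / (2 * (k : ℝ) + 1) ^ 2) 0 = catalanConstant := by
  simp only [alternatingTail, catalanConstant, add_zero, mul_one_div]

lemma hasSum_evenMomentSum_catalan : HasSum evenMomentSum catalanConstant := by
  rw [← alternatingTail_one_div_odd_sq]
  exact hasSum_of_add_succ_eq_sub_succ (hasSum_one_div_odd_pow_s16 one_lt_two).summable
    evenMomentSum_nonneg evenMomentSum_add_succ tendsto_evenMomentSum

lemma hasSum_evenMomentSum_div_catalan_sq :
    HasSum (fun k : ℕ ↦ evenMomentSum k / (2 * (k : ℝ) + 1) ^ 2) (catalanConstant ^ 2) := by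
  simp only [← alternatingTail_one_div_odd_sq, div_eq_mul_one_div (evenMomentSum _)]
  exact hasSum_mul_of_add_succ_eq_sub_succ (hasSum_one_div_odd_pow_s16 one_lt_two).summable
    (fun k ↦ mul_nonneg (evenMomentSum_nonneg k) (by positivity))
    evenMomentSum_add_succ tendsto_evenMomentSum

/-! ### Moment series -/

/-- The series `∑ₖ I n k / (2 * k + 1) ^ r` of moments `I n k = halfAngleMoment n k`, over which
all sums of the theorem are expanded. For `n = r = 0` it diverges and has the junk value `0`. -/
noncomputable def momentSeries (r n : ℕ) : ℝ :=
  ∑' k : ℕ, halfAngleMoment n k / (2 * (k : ℝ) + 1) ^ r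

lemma hasSum_halfAngleMoment_succ (n : ℕ) :
    HasSum (halfAngleMoment (n + 1)) ((halfAngleMoment n 0 + halfAngleMoment (n + 1) 0) / 2) := by
  refine hasSum_of_eq_sub_succ (x := fun k ↦ (halfAngleMoment n k + halfAngleMoment (n + 1) k) / 2)
    (halfAngleMoment_nonneg _) (fun k ↦ ?_) ?_
  · linarith [halfAngleMoment_sub_right_succ n k]
  · simpa using ((tendsto_halfAngleMoment_right n).add
      (tendsto_halfAngleMoment_right (n + 1))).div_const 2

lemma momentSeries_zero_succ (n : ℕ) :
    momentSeries 0 (n + 1) = (halfAngleMoment n 0 + halfAngleMoment (n + 1) 0) / 2 := by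
  simpa only [momentSeries, pow_zero, div_one] using (hasSum_halfAngleMoment_succ n).tsum_eq

lemma halfAngleMoment_div_odd_pow_nonneg (r n k : ℕ) :
    0 ≤ halfAngleMoment n k / (2 * (k : ℝ) + 1) ^ r :=
  div_nonneg (halfAngleMoment_nonneg n k) (by positivity)

lemma halfAngleMoment_div_odd_pow_le (r n k : ℕ) :
    halfAngleMoment n k / (2 * (k : ℝ) + 1) ^ r ≤ halfAngleMoment n k :=
  div_le_self (halfAngleMoment_nonneg n k)
    (one_le_pow₀ (le_add_of_nonneg_left (by positivity)))

lemma hasSum_momentSeries (r n : ℕ) :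
    HasSum (fun k : ℕ ↦ halfAngleMoment (n + 1) k / (2 * (k : ℝ) + 1) ^ r)
      (momentSeries r (n + 1)) :=
  (Summable.of_nonneg_of_le (halfAngleMoment_div_odd_pow_nonneg r (n + 1))
    (halfAngleMoment_div_odd_pow_le r (n + 1)) (hasSum_halfAngleMoment_succ n).summable).hasSum

lemma momentSeries_nonneg (r n : ℕ) : 0 ≤ momentSeries r n :=
  tsum_nonneg (halfAngleMoment_div_odd_pow_nonneg r n)

lemma tendsto_momentSeries (r : ℕ) : Tendsto (momentSeries r) atTop (𝓝 0) := by
  refine (tendsto_add_atTop_iff_nat 1).1 (squeeze_zero (fun n ↦ momentSeries_nonneg r (n + 1))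
    (fun n ↦ hasSum_le (halfAngleMoment_div_odd_pow_le r (n + 1)) (hasSum_momentSeries r n)
      (hasSum_halfAngleMoment_succ n)) ?_)
  have hmoment := tendsto_halfAngleMoment_left 0
  simpa using (hmoment.add (hmoment.comp (tendsto_add_atTop_nat 1))).div_const 2

lemma momentSeries_sub_add_two (r n : ℕ) :
    (n + 2) * (momentSeries (r + 1) (n + 1) - momentSeries (r + 1) (n + 3)) =
      momentSeries r (n + 2) := by
  refine ((((hasSum_momentSeries (r + 1) n).sub (hasSum_momentSeries (r + 1) (n + 2))).mul_left
    (n + 2 : ℝ)).congr_fun fun k ↦ ?_).unique (hasSum_momentSeries r (n + 1))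
  have hrec := halfAngleMoment_sub_left_add_two (n + 1) k
  push_cast at hrec
  rw [← mul_div_mul_left _ _ (show 2 * (k : ℝ) + 1 ≠ 0 by positivity), ← pow_succ', ← hrec]
  ring

lemma momentSeries_zero_add_two (n : ℕ) :
    (n + 2) * momentSeries 0 (n + 3) = (n + 1) * momentSeries 0 (n + 1) := by
  have h₁ := halfAngleMoment_sub_left_add_two n 0
  have h₂ := halfAngleMoment_sub_left_add_two (n + 1) 0
  push_cast at h₁ h₂
  rw [momentSeries_zero_succ, momentSeries_zero_succ]
  linear_combination -(h₁ + h₂) / 2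

lemma momentSeries_zero_two_mul_add_two (i : ℕ) :
    momentSeries 0 (2 * i + 2) = 4 ^ i / ((i + 1) * (i + 1).centralBinom) := by
  induction i with
  | zero =>
    have hrec := halfAngleMoment_sub_left_add_two 0 0
    rw [halfAngleMoment_zero_left] at hrec
    norm_num [momentSeries_zero_succ, Nat.centralBinom, Nat.choose] at hrec ⊢
    linarith
  | succ i ih =>
    have hrec := momentSeries_zero_add_two (2 * i + 1)
    have hbinom : ((i + 1 + 1) * (i + 1 + 1).centralBinom : ℝ) =
        2 * (2 * (i + 1) + 1) * (i + 1).centralBinom :=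
      mod_cast Nat.succ_mul_centralBinom_succ (i + 1)
    have hpos : (0 : ℝ) < (i + 1).centralBinom := mod_cast (i + 1).centralBinom_pos
    push_cast at hrec ⊢
    rw [ih, show 2 * (i : ℝ) + 1 + 1 = 2 * (i + 1) by ring] at hrec
    rw [hbinom, eq_div_iff (by positivity), show 2 * (i + 1) + 2 = 2 * i + 1 + 3 by ring]
    field_simp at hrec
    linear_combination 2 * hrec

lemma hasSum_momentSeries_zero_div (m : ℕ) :
    HasSum (fun q : ℕ ↦ momentSeries 0 (2 * (q + m) + 2) / (2 * ((q + m : ℕ) : ℝ) + 2))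
      (momentSeries 1 (2 * m + 1)) := by
  refine hasSum_nat_add_of_eq_sub_succ
    (f := fun n : ℕ ↦ momentSeries 0 (2 * n + 2) / (2 * (n : ℝ) + 2))
    (x := fun n ↦ momentSeries 1 (2 * n + 1))
    (fun n ↦ div_nonneg (momentSeries_nonneg _ _) (by positivity)) (fun n ↦ ?_)
    ((tendsto_momentSeries 1).comp (tendsto_two_mul_add_atTop 1)) m
  have hrec := momentSeries_sub_add_two 0 (2 * n)
  push_cast at hrec
  rw [mul_add_one, ← hrec, mul_div_cancel_left₀ _ (by positivity)]

/-- Closed form of the tail `∑_{n ≥ m} A 1 (2 * n + 1) / (2 * n + 3)`, `A = momentSeries`, which is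
the sum over `n₂` once the sum over `n₁` has been evaluated. -/
noncomputable def momentTail (m : ℕ) : ℝ :=
  momentSeries 2 (2 * m + 2) + momentSeries 1 (2 * m + 1) - momentSeries 0 (2 * m + 2)

lemma momentSeries_one_div_eq_momentTail_sub (n : ℕ) :
    momentSeries 1 (2 * n + 1) / (2 * n + 3) = momentTail n - momentTail (n + 1) := by
  have h₂ := momentSeries_sub_add_two 1 (2 * n + 1)
  have h₁ := momentSeries_sub_add_two 0 (2 * n)
  have h₀ := momentSeries_zero_add_two (2 * n + 1)
  push_cast at h₀ h₁ h₂
  rw [momentTail, momentTail, mul_add_one, div_eq_iff (by positivity)]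
  linear_combination -h₂ - h₁ - h₀

lemma tendsto_momentTail : Tendsto momentTail atTop (𝓝 0) := by
  have hseries (r c : ℕ) : Tendsto (fun m ↦ momentSeries r (2 * m + c)) atTop (𝓝 0) :=
    (tendsto_momentSeries r).comp (tendsto_two_mul_add_atTop c)
  unfold momentTail
  simpa only [add_zero, sub_zero] using ((hseries 2 2).add (hseries 1 1)).sub (hseries 0 2)

lemma hasSum_momentSeries_one_div (m : ℕ) :
    HasSum (fun p : ℕ ↦ momentSeries 1 (2 * (p + m) + 1) / (2 * ((p + m : ℕ) : ℝ) + 3))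
      (momentTail m) :=
  hasSum_nat_add_of_eq_sub_succ
    (f := fun n : ℕ ↦ momentSeries 1 (2 * n + 1) / (2 * (n : ℝ) + 3))
    (fun n ↦ div_nonneg (momentSeries_nonneg _ _) (by positivity))
    momentSeries_one_div_eq_momentTail_sub tendsto_momentTail m

lemma hasSum_momentSeries_odd_div {r : ℕ} {s : ℝ}
    (hs : HasSum (fun k : ℕ ↦ 1 / (2 * (k : ℝ) + 1) ^ (r + 2)) s) :
    HasSum (fun j : ℕ ↦ momentSeries r (2 * j + 1) / (2 * j + 1)) s := by
  refine hasSum_comm_of_nonneg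
    (f := fun k j : ℕ ↦ halfAngleMoment (2 * j + 1) k / (2 * (k : ℝ) + 1) ^ r / (2 * j + 1))
    (fun k j ↦ div_nonneg (halfAngleMoment_div_odd_pow_nonneg r _ k) (by positivity))
    (fun k ↦ ?_) (fun j ↦ (hasSum_momentSeries r (2 * j)).div_const _) hs
  simpa only [div_right_comm _ _ ((2 * (k : ℝ) + 1) ^ r), div_div, ← pow_add, add_comm r 2] using
    (hasSum_halfAngleMoment_odd k).div_const ((2 * (k : ℝ) + 1) ^ r)

lemma hasSum_momentSeries_even_div {r : ℕ} {s : ℝ}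
    (hs : HasSum (fun k : ℕ ↦ evenMomentSum k / (2 * (k : ℝ) + 1) ^ r) s) :
    HasSum (fun j : ℕ ↦ momentSeries r (2 * j + 2) / (2 * j + 1)) s := by
  refine hasSum_comm_of_nonneg
    (f := fun k j : ℕ ↦ halfAngleMoment (2 * j + 2) k / (2 * (k : ℝ) + 1) ^ r / (2 * j + 1))
    (fun k j ↦ div_nonneg (halfAngleMoment_div_odd_pow_nonneg r _ k) (by positivity))
    (fun k ↦ ?_) (fun j ↦ (hasSum_momentSeries r (2 * j + 1)).div_const _) hs
  simpa only [div_right_comm _ _ ((2 * (k : ℝ) + 1) ^ r)] using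
    (hasSum_evenMomentSum k).div_const ((2 * (k : ℝ) + 1) ^ r)

lemma hasSum_momentTail_div :
    HasSum (fun j : ℕ ↦ momentTail j / (2 * j + 1))
      (catalanConstant ^ 2 + 7 / 8 * (∑' n : ℕ, 1 / ((n : ℝ) + 1) ^ 3) - catalanConstant) := by
  have hzeta : HasSum (fun k : ℕ ↦ 1 / (2 * (k : ℝ) + 1) ^ (1 + 2))
      (7 / 8 * ∑' n : ℕ, 1 / ((n : ℝ) + 1) ^ 3) := by
    convert hasSum_one_div_odd_pow_s16 (m := 3) (by norm_num) using 2
    norm_num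
  have hcatalan : HasSum (fun k : ℕ ↦ evenMomentSum k / (2 * (k : ℝ) + 1) ^ 0) catalanConstant := by
    simpa only [pow_zero, div_one] using hasSum_evenMomentSum_catalan
  simpa only [momentTail, sub_div, add_div] using
    ((hasSum_momentSeries_even_div hasSum_evenMomentSum_div_catalan_sq).add
      (hasSum_momentSeries_odd_div hzeta)).sub (hasSum_momentSeries_even_div hcatalan)

/-! ### The triple series -/

/-- Parametrizes the triples `n₁ ≥ n₂ ≥ n₃ ≥ 1` by `(n₃ - 1, n₂ - n₃, n₁ - n₂)`. -/
def gapEquiv :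
    ℕ × ℕ × ℕ ≃ {p : ℕ × ℕ × ℕ // p.2.2 ≤ p.2.1 ∧ p.2.1 ≤ p.1 ∧ 1 ≤ p.2.2} where
  toFun x := ⟨(x.2.2 + (x.2.1 + x.1) + 1, x.2.1 + x.1 + 1, x.1 + 1), by grind⟩
  invFun p := (p.1.2.2 - 1, p.1.2.1 - p.1.2.2, p.1.1 - p.1.2.1)
  left_inv x := by grind
  right_inv p := by grind

lemma four_pow_div_choose_eq_momentSeries (i : ℕ) :
    (4 : ℝ) ^ (i + 1) / (((2 * (i + 1)).choose (i + 1) : ℝ) * ((i + 1 : ℕ) : ℝ) ^ 2) =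
      8 * (momentSeries 0 (2 * i + 2) / (2 * i + 2)) := by
  have hpos : (0 : ℝ) < (i + 1).centralBinom := mod_cast (i + 1).centralBinom_pos
  rw [momentSeries_zero_two_mul_add_two, ← Nat.centralBinom_eq_two_mul_choose]
  push_cast
  field_simp
  ring

lemma hasSum_momentSeries_triple :
    HasSum (fun x : ℕ × ℕ × ℕ ↦
        momentSeries 0 (2 * (x.2.2 + (x.2.1 + x.1)) + 2) /
          (2 * ((x.2.2 + (x.2.1 + x.1) : ℕ) : ℝ) + 2) /
          (2 * ((x.2.1 + x.1 : ℕ) : ℝ) + 3) / (2 * x.1 + 1))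
      (catalanConstant ^ 2 + 7 / 8 * (∑' n : ℕ, 1 / ((n : ℝ) + 1) ^ 3) - catalanConstant) := by
  have hnonneg (m n l : ℕ) :
      0 ≤ momentSeries 0 (2 * m + 2) / (2 * (m : ℝ) + 2) / (2 * (n : ℝ) + 3) / (2 * (l : ℝ) + 1) :=
    div_nonneg (div_nonneg (div_nonneg (momentSeries_nonneg _ _) (by positivity)) (by positivity))
      (by positivity)
  refine hasSum_prod_of_nonneg (fun _ ↦ hnonneg _ _ _) (fun j ↦ ?_) hasSum_momentTail_div
  refine hasSum_prod_of_nonneg (fun _ ↦ hnonneg _ _ _) (fun p ↦ ?_)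
    ((hasSum_momentSeries_one_div j).div_const (2 * (j : ℝ) + 1))
  exact ((hasSum_momentSeries_zero_div (p + j)).div_const _).div_const _

end

/-- `∑_{n₁ ≥ n₂ ≥ n₃ ≥ 1} 4^{n₁}/(binom(2n₁,n₁) n₁² (2n₂+1)(2n₃−1))
  = 7ζ(3) + 8G² − 8G`. -/
theorem stmt16 :
    (∑' p : {p : ℕ × ℕ × ℕ // p.2.2 ≤ p.2.1 ∧ p.2.1 ≤ p.1 ∧ 1 ≤ p.2.2},
      (4 : ℝ) ^ p.1.1 /
        ((Nat.choose (2 * p.1.1) p.1.1 : ℝ) * (p.1.1 : ℝ) ^ 2 *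
          (2 * (p.1.2.1 : ℝ) + 1) * (2 * (p.1.2.2 : ℝ) - 1))) =
    7 * (∑' n : ℕ, 1 / ((n : ℝ) + 1) ^ 3) +
      8 * (∑' k : ℕ, (-1 : ℝ) ^ k / (2 * (k : ℝ) + 1) ^ 2) ^ 2 -
      8 * (∑' k : ℕ, (-1 : ℝ) ^ k / (2 * (k : ℝ) + 1) ^ 2) := by
  rw [← gapEquiv.tsum_eq]
  refine ((hasSum_momentSeries_triple.mul_left 8).congr_fun ?_).tsum_eq.trans ?_
  · rintro ⟨j, p, q⟩
    have hn₂ : 2 * ((p + j + 1 : ℕ) : ℝ) + 1 = 2 * ((p + j : ℕ) : ℝ) + 3 := by push_cast; ring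
    have hn₃ : 2 * ((j + 1 : ℕ) : ℝ) - 1 = 2 * j + 1 := by push_cast; ring
    simp only [gapEquiv, Equiv.coe_fn_mk]
    rw [hn₂, hn₃, ← div_div, ← div_div, four_pow_div_choose_eq_momentSeries, mul_div_assoc,
      mul_div_assoc]
  · rw [catalanConstant]
    ring
end

section
/- We have ∑_{n₁ ≥ n₂ ≥ 1} 1 / (binom(2n₁, n₁) · (2n₁+1) · (2n₂)²) = π³ / (324 √3), where the double sum is over integers n₁ ≥ n₂ ≥ 1. -/
open Real

/-!
Write `c n = 4 ^ n / ((2 * n + 1) * binom (2 * n) n)`, so that `t / cos t = ∑ c n * sin t ^ (2n+1)`.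
Since `(2n+3) c (n+1) = (2n+2) c n`, differentiating a partial sum of
`∑ c n * w n * cos t * sin t ^ (2n+1)` telescopes into the differences of the weights `w`. If these
differences are `v n / (2n+2) ^ 2`, what is left is `w 0` plus the termwise primitive of the
corresponding sum for `v`, up to a remainder that decays geometrically. Hence each further level
of nested summation in the weights integrates the limit twice, turning `t` into `t ^ 3 / 3!`,
`t ^ 5 / 5!`, and so on. The double series is one level of nesting at `t = π / 6`,
where `sin t = 1 / 2`.
-/

theorem hasSum_subtype_prod_of_nonneg {α β : Type*} {p : α → β → Prop} {s : α → Finset β}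
    {f : α → β → ℝ} {x : ℝ} (hs : ∀ a b, b ∈ s a ↔ p a b) (hf : ∀ a, ∀ b ∈ s a, 0 ≤ f a b)
    (h : HasSum (fun a => ∑ b ∈ s a, f a b) x) :
    HasSum (fun q : {q : α × β // p q.1 q.2} => f q.1.1 q.1.2) x := by
  obtain rfl : (fun a b => b ∈ s a) = p := by
    ext a b
    exact hs a b
  rw [← (Equiv.subtypeProdEquivSigmaSubtype fun a b => b ∈ s a).symm.hasSum_iff]
  have hfiber (a : α) : HasSum (fun b : s a => f a b) (∑ b ∈ s a, f a b) :=
    (s a).hasSum fun b => f a b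
  refine h.sigma_of_hasSum hfiber ((summable_sigma_of_nonneg fun q => hf _ _ q.2.2).2 ?_)
  exact ⟨fun a => (hfiber a).summable, h.summable.congr fun a => (hfiber a).tsum_eq.symm⟩

theorem hasDerivAt_pow_div_factorial {𝕜 : Type*} [NontriviallyNormedField 𝕜] [CharZero 𝕜]
    (n : ℕ) (t : 𝕜) :
    HasDerivAt (fun x : 𝕜 => x ^ (n + 1) / (n + 1).factorial) (t ^ n / n.factorial) t := by
  refine ((hasDerivAt_pow (n + 1) t).div_const _).congr_deriv ?_
  rw [Nat.add_sub_cancel, Nat.factorial_succ]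
  push_cast
  field_simp

theorem abs_sin_le_sin_of_abs_le {a t : ℝ} (ha : a ≤ π / 2) (ht : |t| ≤ a) : |sin t| ≤ sin a := by
  obtain ⟨hneg, hpos⟩ := abs_le.1 ht
  rw [abs_le, ← sin_neg]
  constructor <;> apply sin_le_sin_of_le_of_le_pi_div_two <;> linarith

theorem sin_lt_one_of_abs_lt_pi_div_two {a : ℝ} (ha : |a| < π / 2) : sin a < 1 := by
  obtain ⟨hneg, hpos⟩ := abs_lt.1 ha
  exact sin_pi_div_two ▸ sin_lt_sin_of_lt_of_le_pi_div_two hneg.le le_rfl hpos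

section UniformConvergence

open Filter Topology

theorem tendstoUniformlyOn_of_hasDerivWithinAt {ι 𝕜 E : Type*} [RCLike 𝕜] [NormedAddCommGroup E]
    [NormedSpace 𝕜 E] {l : Filter ι} {f f' : ι → 𝕜 → E} {g g' : 𝕜 → E} {s : Set 𝕜} {x₀ : 𝕜}
    (hconv : Convex ℝ s) (hbdd : Bornology.IsBounded s) (hx₀ : x₀ ∈ s)
    (hf : ∀ i, ∀ x ∈ s, HasDerivWithinAt (f i) (f' i x) s x)
    (hg : ∀ x ∈ s, HasDerivWithinAt g (g' x) s x) (hfg : ∀ i, f i x₀ = g x₀)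
    (h : TendstoUniformlyOn f' g' l s) : TendstoUniformlyOn f g l s := by
  obtain ⟨R, hR, hsR⟩ := hbdd.subset_ball_lt 0 x₀
  rw [Metric.tendstoUniformlyOn_iff] at h ⊢
  intro ε hε
  filter_upwards [h (ε / R) (div_pos hε hR)] with i hi x hx
  have hbound : ∀ y ∈ s, ‖g' y - f' i y‖ ≤ ε / R := fun y hy => by
    simpa only [dist_eq_norm] using (hi y hy).le
  have hmv := hconv.norm_image_sub_le_of_norm_hasDerivWithin_le
    (fun y hy => (hg y hy).sub (hf i y hy)) hbound hx₀ hx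
  calc dist (g x) (f i x) = ‖(g - f i) x - (g - f i) x₀‖ := by
        simp only [Pi.sub_apply, hfg, sub_self, sub_zero, dist_eq_norm]
    _ ≤ ε / R * ‖x - x₀‖ := hmv
    _ < ε / R * R := by
        gcongr
        simpa only [Metric.mem_ball, dist_eq_norm] using hsR hx
    _ = ε := div_mul_cancel₀ ε hR.ne'

end UniformConvergence

/-- The coefficients of the power series `arcsin x / √(1 - x ^ 2) = ∑ arcsinCoeff n * x ^ (2n+1)`,
used here with `x = sin t`. -/
noncomputable def arcsinCoeff (n : ℕ) : ℝ :=
  4 ^ n / ((2 * n + 1) * n.centralBinom)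

theorem arcsinCoeff_zero : arcsinCoeff 0 = 1 := by
  simp [arcsinCoeff]

theorem arcsinCoeff_nonneg (n : ℕ) : 0 ≤ arcsinCoeff n := by
  unfold arcsinCoeff
  positivity

theorem arcsinCoeff_succ (n : ℕ) :
    (2 * n + 3) * arcsinCoeff (n + 1) = (2 * n + 2) * arcsinCoeff n := by
  have hrec : ((n : ℝ) + 1) * (n + 1).centralBinom = 2 * (2 * n + 1) * n.centralBinom :=
    mod_cast n.succ_mul_centralBinom_succ
  have hn : (n.centralBinom : ℝ) ≠ 0 := mod_cast n.centralBinom_ne_zero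
  have hn' : ((n + 1).centralBinom : ℝ) ≠ 0 := mod_cast (n + 1).centralBinom_ne_zero
  unfold arcsinCoeff
  push_cast
  field_simp
  linear_combination (-2 * (4 : ℝ) ^ n * (2 * n + 3)) * hrec

theorem arcsinCoeff_le_one (n : ℕ) : arcsinCoeff n ≤ 1 := by
  induction n with
  | zero => exact arcsinCoeff_zero.le
  | succ n ih => nlinarith [arcsinCoeff_succ n, arcsinCoeff_nonneg (n + 1)]

/-- The multiple harmonic sum `∑ 1 / ((2 * m₁) ^ 2 * ⋯ * (2 * mₖ) ^ 2)` over
`n ≥ m₁ > ⋯ > mₖ ≥ 1`, the weight attached to the `n`-th term of the series of depth `k`. It is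
defined by splitting off `m₁ = m + 1`. -/
noncomputable def evenHarmonicSum : ℕ → ℕ → ℝ
  | 0, _ => 1
  | k + 1, n => ∑ m ∈ Finset.range n, evenHarmonicSum k m / (2 * m + 2) ^ 2

theorem evenHarmonicSum_succ_zero (k : ℕ) : evenHarmonicSum (k + 1) 0 = 0 := by
  simp [evenHarmonicSum]

theorem evenHarmonicSum_succ_succ (k n : ℕ) :
    evenHarmonicSum (k + 1) (n + 1) =
      evenHarmonicSum (k + 1) n + evenHarmonicSum k n / (2 * n + 2) ^ 2 := by
  simp only [evenHarmonicSum, Finset.sum_range_succ]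

theorem evenHarmonicSum_one (n : ℕ) :
    evenHarmonicSum 1 n = ∑ m ∈ Finset.Icc 1 n, 1 / (2 * m : ℝ) ^ 2 := by
  induction n with
  | zero => simp [evenHarmonicSum]
  | succ n ih =>
    rw [evenHarmonicSum_succ_succ, ih, Finset.sum_Icc_succ_top (by lia)]
    simp only [evenHarmonicSum, Nat.cast_succ, mul_add, mul_one]

theorem evenHarmonicSum_nonneg (k n : ℕ) : 0 ≤ evenHarmonicSum k n := by
  induction k generalizing n with
  | zero => exact zero_le_one
  | succ k ih => exact Finset.sum_nonneg fun m _ => div_nonneg (ih m) (by positivity)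

theorem evenHarmonicSum_le_one (k n : ℕ) : evenHarmonicSum k n ≤ 1 := by
  induction k generalizing n with
  | zero => exact le_rfl
  | succ k ih =>
    suffices h : evenHarmonicSum (k + 1) n ≤ 1 - 1 / (n + 1) from
      h.trans (sub_le_self 1 (by positivity))
    induction n with
    | zero => simp [evenHarmonicSum_succ_zero]
    | succ n ihn =>
      have hterm :=
        calc evenHarmonicSum k n / (2 * n + 2 : ℝ) ^ 2 ≤ 1 / (2 * n + 2 : ℝ) ^ 2 := by
              gcongr
              exact ih n
          _ ≤ 1 / ((n + 1 : ℝ) * (n + 2)) := by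
              gcongr
              nlinarith
          _ = 1 / (n + 1 : ℝ) - 1 / (n + 2) := by
              field_simp
              ring
      rw [evenHarmonicSum_succ_succ, Nat.cast_succ, add_assoc (n : ℝ), one_add_one_eq_two]
      linarith

section PartialSums

variable {v w : ℕ → ℝ} (N : ℕ) (t : ℝ)

/-- The partial sums of the arcsine series with weights `w`, at `x = sin t` and multiplied by
`cos t` so that for `w = evenHarmonicSum k` the limit is a monomial in `t`. -/
noncomputable def arcsinPartialSum (w : ℕ → ℝ) (N : ℕ) (t : ℝ) : ℝ :=
  ∑ n ∈ Finset.range N, arcsinCoeff n * w n * (cos t * sin t ^ (2 * n + 1))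

/-- The termwise primitive of `arcsinPartialSum w N` that vanishes at `0`. -/
noncomputable def arcsinPartialPrimitive (w : ℕ → ℝ) (N : ℕ) (t : ℝ) : ℝ :=
  ∑ n ∈ Finset.range N, arcsinCoeff n * w n * (sin t ^ (2 * n + 2) / (2 * n + 2))

theorem arcsinPartialSum_apply_zero : arcsinPartialSum w N 0 = 0 := by
  simp [arcsinPartialSum]

theorem arcsinPartialPrimitive_apply_zero : arcsinPartialPrimitive w N 0 = 0 := by
  simp [arcsinPartialPrimitive]

theorem hasDerivAt_arcsinPartialPrimitive :
    HasDerivAt (arcsinPartialPrimitive w N) (arcsinPartialSum w N t) t := by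
  refine HasDerivAt.fun_sum fun n _ => HasDerivAt.const_mul _ ?_
  refine (((hasDerivAt_sin t).fun_pow (2 * n + 2)).div_const _).congr_deriv ?_
  rw [Nat.add_sub_assoc one_le_two]
  push_cast
  field_simp

theorem hasDerivAt_cos_mul_sin_pow (n : ℕ) :
    HasDerivAt (fun x => cos x * sin x ^ (n + 1))
      ((n + 1) * sin t ^ n - (n + 2) * sin t ^ (n + 2)) t := by
  refine ((hasDerivAt_cos t).fun_mul ((hasDerivAt_sin t).fun_pow (n + 1))).congr_deriv ?_
  rw [Nat.add_sub_cancel]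
  push_cast
  linear_combination ((n : ℝ) + 1) * sin t ^ n * cos_sq' t

theorem hasDerivAt_arcsinPartialSum (hw : ∀ n, w (n + 1) = w n + v n / (2 * n + 2) ^ 2) :
    HasDerivAt (arcsinPartialSum w N)
      (w 0 + arcsinPartialPrimitive v N t - (2 * N + 1) * arcsinCoeff N * w N * sin t ^ (2 * N))
      t := by
  induction N with
  | zero =>
    have hsum : arcsinPartialSum w 0 = fun _ => 0 := funext fun x => Finset.sum_range_zero _
    rw [hsum]
    exact (hasDerivAt_const t 0).congr_deriv
      (by simp [arcsinPartialPrimitive, arcsinCoeff_zero])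
  | succ N ih =>
    have hsum : arcsinPartialSum w (N + 1) = fun x =>
        arcsinPartialSum w N x + arcsinCoeff N * w N * (cos x * sin x ^ (2 * N + 1)) :=
      funext fun x => Finset.sum_range_succ _ N
    have hprim : arcsinPartialPrimitive v (N + 1) t = arcsinPartialPrimitive v N t +
        arcsinCoeff N * v N * (sin t ^ (2 * N + 2) / (2 * N + 2)) := Finset.sum_range_succ _ N
    have hv : v N / (2 * N + 2) = (2 * N + 2) * (w (N + 1) - w N) := by
      rw [hw]
      field_simp
      ring
    rw [hsum, hprim]
    refine (ih.fun_add ((hasDerivAt_cos_mul_sin_pow t (2 * N)).const_mul _)).congr_deriv ?_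
    push_cast
    linear_combination sin t ^ (2 * N + 2) *
      (w (N + 1) * arcsinCoeff_succ N - arcsinCoeff N * hv)

end PartialSums

section Convergence

open Filter Topology

variable {a : ℝ}

theorem tendstoUniformlyOn_zero_arcsinCoeff_mul_sin_pow {w : ℕ → ℝ} {C : ℝ} (hw : ∀ n, |w n| ≤ C)
    (ha₀ : 0 ≤ a) (ha : a < π / 2) :
    TendstoUniformlyOn
      (fun (N : ℕ) t => (2 * N + 1) * arcsinCoeff N * w N * sin t ^ (2 * N)) 0 atTop
      (Set.Icc (-a) a) := by
  have hsin₀ : 0 ≤ sin a := sin_nonneg_of_nonneg_of_le_pi ha₀ (by linarith)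
  have hsin : sin a ^ 2 < 1 := by
    have := sin_lt_one_of_abs_lt_pi_div_two ((abs_of_nonneg ha₀).trans_lt ha)
    nlinarith
  have hlim : Tendsto (fun N : ℕ => (2 * N + 1) * C * (sin a ^ 2) ^ N) atTop (𝓝 0) := by
    have h₁ := tendsto_self_mul_const_pow_of_lt_one (sq_nonneg (sin a)) hsin
    have h₀ := tendsto_pow_atTop_nhds_zero_of_lt_one (sq_nonneg (sin a)) hsin
    convert! (h₁.const_mul (2 * C)).add (h₀.const_mul C) using 2 <;> ring
  have hC : 0 ≤ C := (abs_nonneg _).trans (hw 0)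
  rw [Metric.tendstoUniformlyOn_iff]
  intro ε hε
  filter_upwards [hlim.eventually_lt_const hε] with N hN t ht
  rw [Pi.zero_apply, dist_zero_left, norm_eq_abs]
  calc |(2 * N + 1) * arcsinCoeff N * w N * sin t ^ (2 * N)|
      = (2 * N + 1) * (arcsinCoeff N * |w N|) * |sin t| ^ (2 * N) := by
        simp only [abs_mul, abs_pow, abs_of_nonneg (arcsinCoeff_nonneg N), mul_assoc]
        rw [abs_of_nonneg (by positivity)]
    _ ≤ (2 * N + 1) * (1 * C) * sin a ^ (2 * N) := by
        gcongr
        · exact arcsinCoeff_le_one N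
        · exact hw N
        · exact abs_sin_le_sin_of_abs_le ha.le (abs_le.2 ht)
    _ < ε := by rwa [one_mul, pow_mul]

theorem tendstoUniformlyOn_pow_div_factorial_of_hasDerivAt {ι : Type*} {l : Filter ι}
    {f f' : ι → ℝ → ℝ} {n : ℕ} (ha₀ : 0 ≤ a) (hf : ∀ i t, HasDerivAt (f i) (f' i t) t)
    (hf₀ : ∀ i, f i 0 = 0)
    (h : TendstoUniformlyOn f' (fun t => t ^ n / n.factorial) l (Set.Icc (-a) a)) :
    TendstoUniformlyOn f (fun t => t ^ (n + 1) / (n + 1).factorial) l (Set.Icc (-a) a) :=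
  tendstoUniformlyOn_of_hasDerivWithinAt (convex_Icc _ _) (Metric.isBounded_Icc _ _)
    (Set.mem_Icc.2 ⟨neg_nonpos.2 ha₀, ha₀⟩) (fun i t _ => (hf i t).hasDerivWithinAt)
    (fun t _ => (hasDerivAt_pow_div_factorial n t).hasDerivWithinAt)
    (fun i => by simp only [hf₀, zero_pow n.succ_ne_zero, zero_div]) h

theorem tendstoUniformlyOn_arcsinPartialSum_evenHarmonicSum (ha₀ : 0 ≤ a) (ha : a < π / 2)
    (k : ℕ) :
    TendstoUniformlyOn (arcsinPartialSum (evenHarmonicSum k))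
      (fun t => t ^ (2 * k + 1) / (2 * k + 1).factorial) atTop (Set.Icc (-a) a) := by
  have hrem (j : ℕ) := tendstoUniformlyOn_zero_arcsinCoeff_mul_sin_pow
    (fun n => (abs_of_nonneg (evenHarmonicSum_nonneg j n)).trans_le (evenHarmonicSum_le_one j n))
    ha₀ ha
  induction k with
  | zero =>
    refine tendstoUniformlyOn_pow_div_factorial_of_hasDerivAt ha₀
      (fun N t => hasDerivAt_arcsinPartialSum (v := 0) N t (by simp [evenHarmonicSum]))
      (fun N => arcsinPartialSum_apply_zero N) ?_
    have hone : TendstoUniformlyOn (fun (_ : ℕ) (_ : ℝ) => (1 : ℝ)) (fun _ => 1) atTop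
        (Set.Icc (-a) a) := tendsto_const_nhds.tendstoUniformlyOn_const _
    simpa [Pi.sub_def, evenHarmonicSum, arcsinPartialPrimitive] using hone.sub (hrem 0)
  | succ k ih =>
    refine tendstoUniformlyOn_pow_div_factorial_of_hasDerivAt ha₀
      (fun N t => hasDerivAt_arcsinPartialSum N t (evenHarmonicSum_succ_succ k))
      (fun N => arcsinPartialSum_apply_zero N) ?_
    have hprim := tendstoUniformlyOn_pow_div_factorial_of_hasDerivAt ha₀
      hasDerivAt_arcsinPartialPrimitive arcsinPartialPrimitive_apply_zero ih
    simpa [Pi.sub_def, evenHarmonicSum_succ_zero, mul_add] using hprim.sub (hrem (k + 1))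

end Convergence

theorem summable_arcsinCoeff_mul_evenHarmonicSum_mul_sin_pow (k : ℕ) {t : ℝ} (ht : |t| < π / 2) :
    Summable fun n => arcsinCoeff n * evenHarmonicSum k n * sin t ^ (2 * n + 1) := by
  have hsin : |sin t| < 1 := (abs_sin_le_sin_of_abs_le ht.le le_rfl).trans_lt
    (sin_lt_one_of_abs_lt_pi_div_two ((abs_abs t).trans_lt ht))
  refine .of_norm_bounded (summable_geometric_of_lt_one (abs_nonneg (sin t)) hsin) fun n => ?_
  rw [norm_eq_abs, abs_mul, abs_pow, abs_of_nonneg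
    (mul_nonneg (arcsinCoeff_nonneg n) (evenHarmonicSum_nonneg k n))]
  calc arcsinCoeff n * evenHarmonicSum k n * |sin t| ^ (2 * n + 1)
      ≤ 1 * |sin t| ^ n := by
        gcongr ?_ * ?_
        · exact mul_le_one₀ (arcsinCoeff_le_one n) (evenHarmonicSum_nonneg k n)
            (evenHarmonicSum_le_one k n)
        · exact pow_le_pow_of_le_one (abs_nonneg _) hsin.le (by lia)
    _ = |sin t| ^ n := one_mul _

theorem hasSum_arcsinCoeff_mul_evenHarmonicSum_mul_sin_pow (k : ℕ) {t : ℝ} (ht : |t| < π / 2) :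
    HasSum (fun n => arcsinCoeff n * evenHarmonicSum k n * sin t ^ (2 * n + 1))
      (t ^ (2 * k + 1) / (2 * k + 1).factorial / cos t) := by
  have hcos : cos t ≠ 0 := (cos_pos_of_mem_Ioo (abs_lt.1 ht)).ne'
  rw [(summable_arcsinCoeff_mul_evenHarmonicSum_mul_sin_pow k ht).hasSum_iff_tendsto_nat]
  have hlim := (tendstoUniformlyOn_arcsinPartialSum_evenHarmonicSum (abs_nonneg t) ht k).tendsto_at
    (abs_le.1 le_rfl)
  refine (hlim.div_const (cos t)).congr fun N => ?_
  rw [arcsinPartialSum, Finset.sum_div]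
  refine Finset.sum_congr rfl fun n _ => ?_
  field_simp

theorem hasSum_evenHarmonicSum_div_centralBinom (k : ℕ) :
    HasSum (fun n : ℕ => evenHarmonicSum k n / (n.centralBinom * (2 * n + 1)))
      (4 / √3 * ((π / 6) ^ (2 * k + 1) / (2 * k + 1).factorial)) := by
  have hπ : |π / 6| < π / 2 := by
    rw [abs_of_pos (by positivity)]
    linarith [pi_pos]
  convert! (hasSum_arcsinCoeff_mul_evenHarmonicSum_mul_sin_pow k hπ).mul_left 2 using 1
  · funext n
    have hpow : (1 / 2 : ℝ) ^ (2 * n + 1) = 1 / (2 * 4 ^ n) := by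
      rw [pow_succ', pow_mul, one_div_pow, one_div_pow, one_div_mul_one_div]
      norm_num
    rw [sin_pi_div_six, hpow, arcsinCoeff]
    field_simp
  · rw [cos_pi_div_six]
    field_simp
    norm_num

/-- `∑_{n₁ ≥ n₂ ≥ 1} 1/(binom(2n₁,n₁)(2n₁+1)(2n₂)²) = π³/(324√3)`. -/
theorem stmt18 :
    (∑' p : {p : ℕ × ℕ // p.2 ≤ p.1 ∧ 1 ≤ p.2},
      1 / ((Nat.choose (2 * p.1.1) p.1.1 : ℝ) * (2 * (p.1.1 : ℝ) + 1) *
        (2 * (p.1.2 : ℝ)) ^ 2)) =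
    π ^ 3 / (324 * Real.sqrt 3) := by
  have hinner (n : ℕ) : evenHarmonicSum 1 n / (n.centralBinom * (2 * n + 1)) =
      ∑ m ∈ Finset.Icc 1 n,
        1 / ((Nat.choose (2 * n) n : ℝ) * (2 * (n : ℝ) + 1) * (2 * (m : ℝ)) ^ 2) := by
    rw [evenHarmonicSum_one, Finset.sum_div, Nat.centralBinom_eq_two_mul_choose]
    exact Finset.sum_congr rfl fun m _ => by rw [div_div, mul_comm]
  have hvalue : 4 / √3 * ((π / 6) ^ (2 * 1 + 1) / (2 * 1 + 1).factorial) =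
      π ^ 3 / (324 * √3) := by
    norm_num [Nat.factorial]
    field_simp
    norm_num
  have houter := hasSum_evenHarmonicSum_div_centralBinom 1
  simp only [hinner, hvalue] at houter
  exact (hasSum_subtype_prod_of_nonneg (fun n m => Finset.mem_Icc.trans and_comm)
    (fun _ _ _ => by positivity) houter).tsum_eq
end
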